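/- arXiv:0910.5672 — 2 statements merged into one kernel-verified Lean document; each statement's English description precedes it below -/
import Mathlib

section
/- Let n ≥ 1, ν > 0, and let h = (h₁,…,hₙ) : ℝⁿ → ℝⁿ be smooth and bounded. If v¹ and v² are two globally bounded, parabolically Hölder continuous classical solutions on [0,∞)×ℝⁿ of the Cauchy problem for the multivariate viscous Burgers system with the same initial data h, then v¹ = v² identically. In other words, the Cauchy problem for the multivariate Burgers equation has at most one globally bounded Hölder continuous classical solution. -/
open Set

noncomputable section

abbrev E (n : ℕ) := EuclideanSpace ℝ (Fin n)

/-- Partial derivative of `f` in the `j`-th coordinate direction. -/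
noncomputable def pd {n : ℕ} (f : E n → ℝ) (j : Fin n) (x : E n) : ℝ :=
  fderiv ℝ f x (EuclideanSpace.single j 1)

/-- `u` is a classical solution on `[0,∞) × ℝⁿ` of the multivariate viscous Burgers
system `∂uᵢ/∂t = ν Δuᵢ − Σⱼ uⱼ ∂uᵢ/∂xⱼ` with initial data `h`. -/
def IsBurgersSolution (n : ℕ) (ν : ℝ) (h : Fin n → E n → ℝ)
    (u : Fin n → ℝ → E n → ℝ) : Prop :=
  (∀ i, ContinuousOn (fun p : ℝ × E n => u i p.1 p.2) (Ici 0 ×ˢ univ)) ∧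
  (∀ i x, ∀ t ∈ Ioi (0:ℝ), DifferentiableAt ℝ (fun s => u i s x) t) ∧
  (∀ i, ∀ t ∈ Ici (0:ℝ), Differentiable ℝ (u i t) ∧ ∀ j,
    Differentiable ℝ (pd (u i t) j) ∧ Continuous (pd (u i t) j) ∧
    ∀ k, Continuous (pd (pd (u i t) j) k)) ∧
  (∀ i x, ∀ t ∈ Ioi (0:ℝ), deriv (fun s => u i s x) t =
    ν * ∑ j, pd (pd (u i t) j) j x - ∑ j, u j t x * pd (u i t) j x) ∧
  (∀ i x, u i 0 x = h i x)

/-- `u` is globally bounded on `[0,∞) × ℝⁿ`. -/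
def GloballyBounded (n : ℕ) (u : Fin n → ℝ → E n → ℝ) : Prop :=
  ∃ M : ℝ, ∀ i, ∀ t ∈ Ici (0:ℝ), ∀ x, |u i t x| ≤ M

/-- `u` is parabolically Hölder continuous on `[0,∞) × ℝⁿ` with some exponent
`δ ∈ (0,1)`, with respect to the parabolic distance `e(z₁,z₂) = √|t₁−t₂| + ‖x₁−x₂‖`. -/
def ParabolicHolder (n : ℕ) (u : Fin n → ℝ → E n → ℝ) : Prop :=
  ∃ δ ∈ Ioo (0:ℝ) 1, ∃ C : ℝ, ∀ i, ∀ t₁ ∈ Ici (0:ℝ), ∀ t₂ ∈ Ici (0:ℝ), ∀ x₁ x₂,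
    |u i t₁ x₁ - u i t₂ x₂| ≤ C * (Real.sqrt |t₁ - t₂| + ‖x₁ - x₂‖) ^ δ

/-!
Each component of a solution is transported by the bounded velocity field `u`. Doubling variables
and diffusing `y` along the mirror image of the motion of `x` in the hyperplane orthogonal to
`x - y`, the maximum principle bounds `u(t,x) - u(t,y)` by a concave modulus of `|x - y|` whose
slope at `0` is `O(t^{-1/2})` as `t → 0`, without any regularity of the velocity or of the initial
data. So the gradient of every bounded solution is integrable in time, uniformly in space. The
difference `w = v¹ - v²` satisfies `∂ₜwᵢ = ν Δwᵢ - v¹ · ∇wᵢ - w · ∇v²ᵢ`, whose last term is at most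
`√n ‖∇v²ᵢ‖ |wᵢ|` wherever `|wᵢ|` is the largest component; after division by the exponential of the
time integral of this rate, the maximum principle forces `w = 0`.
-/

section Calculus

open scoped Topology Laplacian RealInnerProductSpace
open InnerProductSpace

lemma deriv_nonneg_of_isMaxOn_Icc {g : ℝ → ℝ} {d a t : ℝ} (hat : a < t)
    (hg : HasDerivAt g d t) (hmax : IsMaxOn g (Icc a t) t) : 0 ≤ d := by
  have hcone : a - t ∈ posTangentConeAt (Icc a t) t :=
    sub_mem_posTangentConeAt_of_segment_subset (segment_symm ℝ a t ▸ segment_subset_Icc hat.le)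
  have hle := hmax.localize.hasFDerivWithinAt_nonpos hg.hasFDerivAt.hasFDerivWithinAt hcone
  simp only [ContinuousLinearMap.toSpanSingleton_apply, smul_eq_mul] at hle
  nlinarith

lemma second_deriv_nonpos_of_isLocalMax {g g' : ℝ → ℝ} {a c : ℝ}
    (hg : ∀ᶠ s in 𝓝 a, HasDerivAt g (g' s) s) (hg' : HasDerivAt g' c a)
    (hmax : IsLocalMax g a) : c ≤ 0 := by
  by_contra! hc
  have hderiv : deriv g =ᶠ[𝓝 a] g' := hg.mono fun s hs => hs.deriv
  have hcrit : deriv g a = 0 := hmax.deriv_eq_zero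
  have hmin : IsLocalMin g a := isLocalMin_of_deriv_deriv_pos
    (by rwa [hderiv.deriv_eq, hg'.deriv]) hcrit hg.self_of_nhds.continuousAt
  have hconst : g =ᶠ[𝓝 a] fun _ => g a := by
    filter_upwards [hmin, hmax] with s h₁ h₂ using le_antisymm h₂ h₁
  have hzero : g' =ᶠ[𝓝 a] fun _ => 0 := by
    filter_upwards [hderiv, hconst.deriv] with s h₁ h₂
    rw [← h₁, h₂, deriv_const]
  exact hc.ne' (hg'.unique ((hasDerivAt_const a (0 : ℝ)).congr_of_eventuallyEq hzero))

section NormedSpace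

variable {V : Type*} [NormedAddCommGroup V] [NormedSpace ℝ V] {f : V → ℝ}

lemma hasDerivAt_add_smul (x v : V) (s : ℝ) : HasDerivAt (fun s : ℝ => x + s • v) v s := by
  simpa using ((hasDerivAt_id s).smul_const v).const_add x

lemma hasDerivAt_comp_add_smul (hf : Differentiable ℝ f) (x v : V) (s : ℝ) :
    HasDerivAt (fun s : ℝ => f (x + s • v)) (fderiv ℝ f (x + s • v) v) s :=
  (hf _).hasFDerivAt.comp_hasDerivAt s (hasDerivAt_add_smul x v s)

lemma hasDerivAt_fderiv_comp_add_smul (hf : ContDiff ℝ 2 f) (x v : V) :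
    HasDerivAt (fun s : ℝ => fderiv ℝ f (x + s • v) v) (iteratedFDeriv ℝ 2 f x ![v, v]) 0 := by
  have hf' : Differentiable ℝ (fderiv ℝ f) :=
    (hf.fderiv_right (m := 1) (by norm_num)).differentiable one_ne_zero
  have h := ((hf' _).hasFDerivAt.comp_hasDerivAt 0 (hasDerivAt_add_smul x v 0)).clm_apply
    (hasDerivAt_const 0 v)
  simpa [iteratedFDeriv_two_apply] using h

lemma isLocalMax_comp_add_smul {x v : V} (hmax : IsLocalMax f x) :
    IsLocalMax (fun s : ℝ => f (x + s • v)) 0 :=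
  IsLocalMax.comp_continuous (g := fun s : ℝ => x + s • v) (by simpa using hmax) (by fun_prop)

lemma iteratedFDeriv_two_nonpos_of_isLocalMax (hf : ContDiff ℝ 2 f) {x : V}
    (hmax : IsLocalMax f x) (v : V) : iteratedFDeriv ℝ 2 f x ![v, v] ≤ 0 :=
  second_deriv_nonpos_of_isLocalMax
    (.of_forall (hasDerivAt_comp_add_smul (hf.differentiable two_ne_zero) x v))
    (hasDerivAt_fderiv_comp_add_smul hf x v) (isLocalMax_comp_add_smul hmax)

end NormedSpace

variable {V : Type*} [NormedAddCommGroup V] [InnerProductSpace ℝ V]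

lemma hasDerivAt_norm_add_smul {z : V} (hz : z ≠ 0) (v : V) :
    HasDerivAt (fun s : ℝ => ‖z + s • v‖) (⟪z, v⟫ / ‖z‖) 0 := by
  have h := (hasDerivAt_add_smul z v 0).norm_sq.sqrt (by simpa using hz)
  simp only [Real.sqrt_sq (norm_nonneg _)] at h
  convert h using 1
  simp only [zero_smul, add_zero]
  field_simp

lemma norm_add_smul_self {z : V} {c : ℝ} (hc : 0 ≤ 1 + c) : ‖z + c • z‖ = ‖z‖ + c * ‖z‖ := by
  rw [show z + c • z = (1 + c) • z by rw [add_smul, one_smul], norm_smul,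
    Real.norm_of_nonneg hc, one_add_mul]

lemma reflection_orthogonal_span_singleton_apply (z v : V) :
    (ℝ ∙ z)ᗮ.reflection v = v - (2 * ⟪z, v⟫ / ‖z‖ ^ 2) • z := by
  rw [Submodule.reflection_orthogonal_apply, Submodule.reflection_singleton_apply, neg_sub,
    two_smul, ← add_smul, RCLike.ofReal_real_eq_id, id]
  ring_nf

lemma add_smul_sub_add_smul_reflection (x y v : V) (s : ℝ) :
    (x + s • v) - (y + s • (ℝ ∙ (x - y))ᗮ.reflection v) =
      (x - y) + (s * (2 * ⟪x - y, v⟫ / ‖x - y‖ ^ 2)) • (x - y) := by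
  rw [reflection_orthogonal_span_singleton_apply, smul_sub, smul_smul]
  abel

lemma eventually_norm_add_smul_sub_add_smul_reflection {x y : V} (hxy : x ≠ y) (v : V) :
    ∀ᶠ s : ℝ in 𝓝 0, ‖(x + s • v) - (y + s • (ℝ ∙ (x - y))ᗮ.reflection v)‖ =
      ‖x - y‖ + s * (2 * (⟪v, x - y⟫ / ‖x - y‖)) := by
  have hz : ‖x - y‖ ≠ 0 := norm_ne_zero_iff.2 (sub_ne_zero.2 hxy)
  have hpos : ∀ᶠ s : ℝ in 𝓝 0, 0 < 1 + s * (2 * ⟪x - y, v⟫ / ‖x - y‖ ^ 2) :=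
    (show ContinuousAt (fun s => 1 + s * (2 * ⟪x - y, v⟫ / ‖x - y‖ ^ 2)) 0 by
      fun_prop).eventually_const_lt (by simp)
  filter_upwards [hpos] with s hs
  rw [add_smul_sub_add_smul_reflection, norm_add_smul_self hs.le, real_inner_comm]
  field_simp

lemma fderiv_eq_of_isLocalMax_sub_comp_norm {f : V → ℝ} {φ : ℝ → ℝ} {φ' : ℝ} {x y : V}
    (hf : Differentiable ℝ f) (hxy : x ≠ y) (hφ : HasDerivAt φ φ' ‖x - y‖)
    (hmax : IsLocalMax (fun z => f z - φ ‖z - y‖) x) (v : V) :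
    fderiv ℝ f x v = φ' * (⟪x - y, v⟫ / ‖x - y‖) := by
  have hnorm := hasDerivAt_norm_add_smul (sub_ne_zero.2 hxy) v
  have hφnorm := HasDerivAt.comp (h₂ := φ) (h := fun s : ℝ => ‖x - y + s • v‖) 0
    (by simpa using hφ) hnorm
  have hline := (hasDerivAt_comp_add_smul hf x v 0).sub hφnorm
  have hmax' := isLocalMax_comp_add_smul (v := v) hmax
  simp only [add_sub_right_comm x _ y] at hmax'
  have hcrit := hmax'.hasDerivAt_eq_zero hline
  rwa [zero_smul, add_zero, sub_eq_zero] at hcrit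

section TwoPoint

variable {f g : V → ℝ} {φ φ' : ℝ → ℝ} {φ'' : ℝ} {x y : V}

lemma iteratedFDeriv_two_sub_le_of_isLocalMax_reflection (hf : ContDiff ℝ 2 f)
    (hg : ContDiff ℝ 2 g) (hxy : x ≠ y) (hφ : ∀ᶠ r in 𝓝 ‖x - y‖, HasDerivAt φ (φ' r) r)
    (hφ' : HasDerivAt φ' φ'' ‖x - y‖)
    (hmax : IsLocalMax (fun p : V × V => f p.1 - g p.2 - φ ‖p.1 - p.2‖) (x, y)) (v : V) :
    iteratedFDeriv ℝ 2 f x ![v, v] - iteratedFDeriv ℝ 2 g y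
      ![(ℝ ∙ (x - y))ᗮ.reflection v, (ℝ ∙ (x - y))ᗮ.reflection v] ≤
      4 * φ'' * (⟪v, x - y⟫ / ‖x - y‖) ^ 2 := by
  set z := x - y
  set w := (ℝ ∙ z)ᗮ.reflection v
  set m := 2 * (⟪v, z⟫ / ‖z‖)
  have hnorm : ∀ᶠ s : ℝ in 𝓝 0, ‖(x + s • v) - (y + s • w)‖ = ‖z‖ + s * m :=
    eventually_norm_add_smul_sub_add_smul_reflection hxy v
  have hr (s : ℝ) : HasDerivAt (fun s : ℝ => ‖z‖ + s * m) m s := by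
    simpa using ((hasDerivAt_id s).mul_const m).const_add ‖z‖
  have hφr : ∀ᶠ s : ℝ in 𝓝 0, HasDerivAt φ (φ' (‖z‖ + s * m)) (‖z‖ + s * m) :=
    (hr 0).continuousAt.eventually (by simpa using hφ)
  have hline : IsLocalMax (fun s : ℝ => f (x + s • v) - g (y + s • w) - φ (‖z‖ + s * m)) 0 :=
    (isLocalMax_comp_add_smul (v := (v, w)) hmax).congr
      (hnorm.mono fun s hs => by simp [hs])
  have hfirst : ∀ᶠ s : ℝ in 𝓝 0, HasDerivAt
      (fun s : ℝ => f (x + s • v) - g (y + s • w) - φ (‖z‖ + s * m))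
      (fderiv ℝ f (x + s • v) v - fderiv ℝ g (y + s • w) w - φ' (‖z‖ + s * m) * m) s := by
    filter_upwards [hφr] with s hs
    exact ((hasDerivAt_comp_add_smul (hf.differentiable two_ne_zero) x v s).sub
      (hasDerivAt_comp_add_smul (hg.differentiable two_ne_zero) y w s)).sub (hs.comp s (hr s))
  have hsecond := ((hasDerivAt_fderiv_comp_add_smul hf x v).sub
    (hasDerivAt_fderiv_comp_add_smul hg y w)).sub
    ((HasDerivAt.comp (h₂ := φ') 0 (by simpa using hφ') (hr 0)).mul_const m)
  have hle := second_deriv_nonpos_of_isLocalMax hfirst hsecond hline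
  linear_combination hle

variable [FiniteDimensional ℝ V]

lemma laplacian_nonpos_of_isLocalMax (hf : ContDiff ℝ 2 f) (hmax : IsLocalMax f x) :
    Δ f x ≤ 0 := by
  rw [laplacian_eq_iteratedFDeriv_stdOrthonormalBasis]
  exact Finset.sum_nonpos fun j _ => iteratedFDeriv_two_nonpos_of_isLocalMax hf hmax _

/- The Laplacian at `y` is computed in the mirror image of the basis used at `x`; the
synchronous coupling would lose the term `4 * φ''`. -/
lemma laplacian_sub_laplacian_le_of_isLocalMax (hf : ContDiff ℝ 2 f)
    (hg : ContDiff ℝ 2 g) (hxy : x ≠ y) (hφ : ∀ᶠ r in 𝓝 ‖x - y‖, HasDerivAt φ (φ' r) r)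
    (hφ' : HasDerivAt φ' φ'' ‖x - y‖)
    (hmax : IsLocalMax (fun p : V × V => f p.1 - g p.2 - φ ‖p.1 - p.2‖) (x, y)) :
    Δ f x - Δ g y ≤ 4 * φ'' := by
  let e := stdOrthonormalBasis ℝ V
  have hz : ‖x - y‖ ≠ 0 := norm_ne_zero_iff.2 (sub_ne_zero.2 hxy)
  rw [laplacian_eq_iteratedFDeriv_orthonormalBasis f e,
    laplacian_eq_iteratedFDeriv_orthonormalBasis g (e.map (ℝ ∙ (x - y))ᗮ.reflection),
    ← Finset.sum_sub_distrib]
  simp only [OrthonormalBasis.map_apply]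
  calc _ ≤ ∑ j, 4 * φ'' * (⟪e j, x - y⟫ / ‖x - y‖) ^ 2 := Finset.sum_le_sum fun j _ =>
        iteratedFDeriv_two_sub_le_of_isLocalMax_reflection hf hg hxy hφ hφ' hmax (e j)
    _ = 4 * φ'' := by
      simp only [div_pow, ← Finset.mul_sum, ← Finset.sum_div, e.sum_sq_inner_right]
      rw [div_self (pow_ne_zero 2 hz), mul_one]

end TwoPoint

end Calculus

section DriftLaplacian

open scoped Topology Laplacian RealInnerProductSpace
open InnerProductSpace

variable {V : Type*} [NormedAddCommGroup V] [InnerProductSpace ℝ V] [FiniteDimensional ℝ V]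
  {ν : ℝ} {f g : V → ℝ} {x y : V}

/-- The spatial operator `ν Δf - b · ∇f` of a drift-diffusion equation with viscosity `ν` and
velocity `b`, at a point `x`; only the value `b` of the velocity at `x` enters. -/
def driftLaplacian (ν : ℝ) (b : V) (f : V → ℝ) (x : V) : ℝ :=
  ν * Δ f x - fderiv ℝ f x b

lemma driftLaplacian_sub (hf : ContDiff ℝ 2 f) (hg : ContDiff ℝ 2 g) (b : V) :
    driftLaplacian ν b (f - g) x = driftLaplacian ν b f x - driftLaplacian ν b g x := by
  rw [driftLaplacian, hf.contDiffAt.laplacian_sub hg.contDiffAt,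
    fderiv_sub (hf.differentiable two_ne_zero x) (hg.differentiable two_ne_zero x),
    sub_apply]
  simp only [driftLaplacian]
  ring

lemma driftLaplacian_add (hf : ContDiff ℝ 2 f) (hg : ContDiff ℝ 2 g) (b : V) :
    driftLaplacian ν b (f + g) x = driftLaplacian ν b f x + driftLaplacian ν b g x := by
  rw [driftLaplacian, hf.contDiffAt.laplacian_add hg.contDiffAt,
    fderiv_add (hf.differentiable two_ne_zero x) (hg.differentiable two_ne_zero x),
    add_apply]
  simp only [driftLaplacian]
  ring

lemma driftLaplacian_smul (hf : ContDiff ℝ 2 f) (b : V) (c : ℝ) :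
    driftLaplacian ν b (c • f) x = c * driftLaplacian ν b f x := by
  rw [driftLaplacian, laplacian_smul c hf.contDiffAt,
    fderiv_const_smul (hf.differentiable two_ne_zero x)]
  simp only [smul_apply, smul_eq_mul, driftLaplacian]
  ring

lemma driftLaplacian_nonpos_of_isLocalMax (hν : 0 ≤ ν) (hf : ContDiff ℝ 2 f)
    (hmax : IsLocalMax f x) (b : V) : driftLaplacian ν b f x ≤ 0 := by
  rw [driftLaplacian, hmax.fderiv_eq_zero, zero_apply, sub_zero]
  exact mul_nonpos_of_nonneg_of_nonpos hν (laplacian_nonpos_of_isLocalMax hf hmax)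

lemma driftLaplacian_sub_driftLaplacian_le_of_isLocalMax {φ φ' : ℝ → ℝ} {φ'' : ℝ} (hν : 0 ≤ ν)
    (hf : ContDiff ℝ 2 f) (hg : ContDiff ℝ 2 g) (hxy : x ≠ y)
    (hφ : ∀ᶠ r in 𝓝 ‖x - y‖, HasDerivAt φ (φ' r) r) (hφ' : HasDerivAt φ' φ'' ‖x - y‖)
    (hφ'_nonneg : 0 ≤ φ' ‖x - y‖)
    (hmax : IsLocalMax (fun p : V × V => f p.1 - g p.2 - φ ‖p.1 - p.2‖) (x, y)) (b c : V) :
    driftLaplacian ν b f x - driftLaplacian ν c g y ≤ 4 * ν * φ'' + φ' ‖x - y‖ * ‖b - c‖ := by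
  have hmax_x : IsLocalMax (fun p => f p - φ ‖p - y‖) x := by
    have h : IsLocalMax (fun p => f p - g y - φ ‖p - y‖) x :=
      IsLocalMax.comp_continuous (g := fun p : V => (p, y)) hmax (by fun_prop)
    filter_upwards [h] with p hp
    linarith
  have hmax_y : IsLocalMax (fun q => (-g) q - φ ‖q - x‖) y := by
    have h : IsLocalMax (fun q => f x - g q - φ ‖x - q‖) y :=
      IsLocalMax.comp_continuous (g := fun q : V => (x, q)) hmax (by fun_prop)
    filter_upwards [h] with q hq
    simp only [Pi.neg_apply, norm_sub_rev _ x]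
    linarith
  have hgrad_x := fderiv_eq_of_isLocalMax_sub_comp_norm (hf.differentiable two_ne_zero) hxy
    hφ.self_of_nhds hmax_x b
  have hgrad_y := fderiv_eq_of_isLocalMax_sub_comp_norm (φ := φ) (φ' := φ' ‖x - y‖)
    (hg.neg.differentiable two_ne_zero) hxy.symm
    (by rw [norm_sub_rev y]; exact hφ.self_of_nhds) hmax_y c
  rw [fderiv_fun_neg, neg_apply, norm_sub_rev y, ← neg_sub x, inner_neg_left,
    neg_div, mul_neg, neg_inj] at hgrad_y
  have hdrift : -⟪x - y, b - c⟫ ≤ ‖x - y‖ * ‖b - c‖ :=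
    (neg_le_abs _).trans (abs_real_inner_le_norm _ _)
  have hgrad : fderiv ℝ g y c - fderiv ℝ f x b ≤ φ' ‖x - y‖ * ‖b - c‖ := by
    calc fderiv ℝ g y c - fderiv ℝ f x b = φ' ‖x - y‖ * (-⟪x - y, b - c⟫ / ‖x - y‖) := by
          rw [hgrad_x, hgrad_y, inner_sub_right]
          ring
      _ ≤ φ' ‖x - y‖ * ‖b - c‖ := by
          gcongr
          rwa [div_le_iff₀' (norm_sub_pos_iff.2 hxy)]
  have hlap := mul_le_mul_of_nonneg_left
    (laplacian_sub_laplacian_le_of_isLocalMax hf hg hxy hφ hφ' hmax) hν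
  simp only [driftLaplacian]
  linarith

end DriftLaplacian

section GrowthBarrier

open scoped Topology Laplacian RealInnerProductSpace
open InnerProductSpace Filter

variable {V : Type*} [NormedAddCommGroup V] {ε Λ t : ℝ} {x : V}

/-- The barrier `ε e^{Λt} (1 + |x|²)`: for large `Λ` it is a strict supersolution of every
drift-diffusion equation with a given bound on the velocity, and its growth at infinity forces
perturbed bounded functions to attain their maximum. -/
def growthBarrier (ε Λ t : ℝ) (x : V) : ℝ := ε * Real.exp (Λ * t) * (1 + ‖x‖ ^ 2)

lemma growthBarrier_pos (hε : 0 < ε) : 0 < growthBarrier ε Λ t x := by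
  unfold growthBarrier
  positivity

lemma continuous_growthBarrier (ε Λ : ℝ) :
    Continuous (Function.uncurry (growthBarrier (V := V) ε Λ)) := by
  unfold growthBarrier Function.uncurry
  fun_prop

lemma hasDerivAt_growthBarrier (ε Λ t : ℝ) (x : V) :
    HasDerivAt (fun s => growthBarrier ε Λ s x) (Λ * growthBarrier ε Λ t x) t := by
  have hexp : HasDerivAt (fun s => Real.exp (Λ * s)) (Real.exp (Λ * t) * Λ) t := by
    simpa using ((hasDerivAt_id t).const_mul Λ).exp
  exact ((hexp.const_mul ε).mul_const (1 + ‖x‖ ^ 2)).congr_deriv (by rw [growthBarrier]; ring)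

lemma norm_le_of_growthBarrier_lt {C : ℝ} (hε : 0 < ε) (hΛ : 0 ≤ Λ) (ht : 0 ≤ t)
    (hC : growthBarrier ε Λ t x < C) : ‖x‖ ≤ C / ε := by
  have hexp : 1 ≤ Real.exp (Λ * t) := Real.one_le_exp (by positivity)
  rw [le_div_iff₀' hε]
  calc ε * ‖x‖ ≤ ε * (1 + ‖x‖ ^ 2) := by
        gcongr
        nlinarith [sq_nonneg (‖x‖ - 1)]
    _ = ε * 1 * (1 + ‖x‖ ^ 2) := by rw [mul_one]
    _ ≤ growthBarrier ε Λ t x := by unfold growthBarrier; gcongr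
    _ ≤ C := hC.le

lemma tendsto_growthBarrier_zero (Λ t : ℝ) (x : V) :
    Tendsto (fun ε => growthBarrier ε Λ t x) (𝓝[>] 0) (𝓝 0) := by
  have hcont : Continuous fun ε => growthBarrier ε Λ t x := by
    unfold growthBarrier
    fun_prop
  exact (hcont.tendsto' 0 0 (by simp [growthBarrier])).mono_left nhdsWithin_le_nhds

variable [InnerProductSpace ℝ V]

lemma contDiff_growthBarrier {n : WithTop ℕ∞} (ε Λ t : ℝ) :
    ContDiff ℝ n (growthBarrier (V := V) ε Λ t) :=
  contDiff_const.mul (contDiff_const.add (contDiff_norm_sq ℝ))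

lemma fderiv_growthBarrier_apply (v : V) :
    fderiv ℝ (growthBarrier ε Λ t) x v = ε * Real.exp (Λ * t) * (2 * ⟪x, v⟫) := by
  have h := ((hasStrictFDerivAt_norm_sq x).hasFDerivAt.const_add 1).const_mul
    (ε * Real.exp (Λ * t))
  rw [show growthBarrier ε Λ t = fun x : V => ε * Real.exp (Λ * t) * (1 + ‖x‖ ^ 2) from rfl,
    h.fderiv]
  simp

variable [FiniteDimensional ℝ V]

lemma laplacian_growthBarrier (ε Λ t : ℝ) (x : V) :
    Δ (growthBarrier (V := V) ε Λ t) x = ε * Real.exp (Λ * t) * (2 * Module.finrank ℝ V) := by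
  let L : V →L[ℝ] V →L[ℝ] ℝ := (2 * ε * Real.exp (Λ * t)) • innerSL ℝ
  have hL (y v : V) : L y v = 2 * ε * Real.exp (Λ * t) * ⟪y, v⟫ := rfl
  have hfderiv : fderiv ℝ (growthBarrier (V := V) ε Λ t) = L := by
    ext y v
    rw [fderiv_growthBarrier_apply, hL]
    ring
  rw [laplacian_eq_iteratedFDeriv_stdOrthonormalBasis]
  simp only [iteratedFDeriv_two_apply, hfderiv, ContinuousLinearMap.fderiv, Matrix.cons_val_zero,
    Matrix.cons_val_one, hL, real_inner_self_eq_norm_sq, OrthonormalBasis.norm_eq_one, one_pow,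
    mul_one, Finset.sum_const, Finset.card_univ, Fintype.card_fin, nsmul_eq_mul]
  ring

lemma driftLaplacian_growthBarrier_lt {ν B : ℝ} {b : V} (hε : 0 < ε) (hν : 0 ≤ ν)
    (hb : ‖b‖ ≤ B) (hΛ : 2 * ν * Module.finrank ℝ V + B < Λ) :
    driftLaplacian ν b (growthBarrier ε Λ t) x < Λ * growthBarrier ε Λ t x := by
  have hx : 2 * ‖x‖ ≤ 1 + ‖x‖ ^ 2 := by nlinarith [sq_nonneg (‖x‖ - 1)]
  have hdrift : -(2 * ⟪x, b⟫) ≤ (1 + ‖x‖ ^ 2) * B := by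
    calc -(2 * ⟪x, b⟫) ≤ 2 * (‖x‖ * ‖b‖) := by
          linarith [neg_le_of_abs_le (abs_real_inner_le_norm x b)]
      _ = 2 * ‖x‖ * ‖b‖ := by ring
      _ ≤ (1 + ‖x‖ ^ 2) * B := by gcongr
  have hdiffusion : 2 * ν * Module.finrank ℝ V ≤ (1 + ‖x‖ ^ 2) * (2 * ν * Module.finrank ℝ V) :=
    le_mul_of_one_le_left (by positivity) (by linarith [sq_nonneg ‖x‖])
  calc driftLaplacian ν b (growthBarrier ε Λ t) x
      = ε * Real.exp (Λ * t) * (2 * ν * Module.finrank ℝ V - 2 * ⟪x, b⟫) := by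
        rw [driftLaplacian, laplacian_growthBarrier, fderiv_growthBarrier_apply]
        ring
    _ < ε * Real.exp (Λ * t) * ((1 + ‖x‖ ^ 2) * Λ) := by
        gcongr
        nlinarith [sq_nonneg ‖x‖]
    _ = Λ * growthBarrier ε Λ t x := by
        unfold growthBarrier
        ring

end GrowthBarrier

lemma exists_pos_max_of_finite_family {J X : Type*} [Finite J] [TopologicalSpace X]
    {Φ : J → ℝ → X → ℝ} {T : ℝ} {K : Set X} {i : J} {x : X} (hK : IsCompact K)
    (hcont : ∀ j, ContinuousOn (Function.uncurry (Φ j)) (Icc 0 T ×ˢ univ))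
    (hsupp : ∀ j, ∀ t ∈ Icc 0 T, ∀ y, 0 < Φ j t y → y ∈ K)
    (hinit : ∀ j y, Φ j 0 y ≤ 0) (hT : 0 ≤ T) (hpos : 0 < Φ i T x) :
    ∃ k, ∃ t ∈ Ioc 0 T, ∃ z, 0 < Φ k t z ∧ ∀ j, ∀ s ∈ Icc 0 T, ∀ y, Φ j s y ≤ Φ k t z := by
  have : Nonempty J := ⟨i⟩
  have hne : (Icc 0 T ×ˢ K).Nonempty := ⟨(T, x), ⟨hT, le_rfl⟩, hsupp i T ⟨hT, le_rfl⟩ x hpos⟩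
  choose p hp hpmax using fun j =>
    (isCompact_Icc.prod hK).exists_isMaxOn hne ((hcont j).mono (by gcongr; exact subset_univ _))
  obtain ⟨k, hk⟩ := Finite.exists_max fun j => Function.uncurry (Φ j) (p j)
  have hmax_of_pos : ∀ j, ∀ s ∈ Icc 0 T, ∀ y, 0 < Φ j s y → Φ j s y ≤ Φ k (p k).1 (p k).2 :=
    fun j s hs y hy =>
    (isMaxOn_iff.1 (hpmax j) (s, y) ⟨hs, hsupp j s hs y hy⟩).trans (hk j)
  have hk_pos : 0 < Φ k (p k).1 (p k).2 := hpos.trans_le (hmax_of_pos i T ⟨hT, le_rfl⟩ x hpos)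
  have ht_pos : 0 < (p k).1 := by
    refine (hp k).1.1.lt_of_ne' fun h => (hinit k (p k).2).not_gt ?_
    rwa [h] at hk_pos
  refine ⟨k, (p k).1, ⟨ht_pos, (hp k).1.2⟩, (p k).2, hk_pos, fun j s hs y => ?_⟩
  rcases lt_or_ge 0 (Φ j s y) with hy | hy
  · exact hmax_of_pos j s hs y hy
  · exact hy.trans hk_pos.le

section DriftDiffusion

variable {V : Type*} [NormedAddCommGroup V] [InnerProductSpace ℝ V] [FiniteDimensional ℝ V]

/-- `u` is a classical solution on `[0,∞) × V` of the drift-diffusion equation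
`∂ₜu = ν Δu - b · ∇u + g` with velocity field `b` and source `g`. -/
structure IsDriftDiffusionSolution (ν : ℝ) (b : ℝ → V → V) (g u : ℝ → V → ℝ) : Prop where
  continuousOn : ContinuousOn (Function.uncurry u) (Ici 0 ×ˢ univ)
  contDiff : ∀ {t}, 0 < t → ContDiff ℝ 2 (u t)
  hasDerivAt : ∀ {t}, 0 < t → ∀ x,
    HasDerivAt (fun s => u s x) (driftLaplacian ν (b t x) (u t) x + g t x) t

namespace IsDriftDiffusionSolution

variable {ν : ℝ} {b : ℝ → V → V} {g u : ℝ → V → ℝ}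

lemma sub {b' : ℝ → V → V} {g' u' : ℝ → V → ℝ} (hu : IsDriftDiffusionSolution ν b g u)
    (hu' : IsDriftDiffusionSolution ν b' g' u') :
    IsDriftDiffusionSolution ν b
      (fun t x => g t x - g' t x - fderiv ℝ (u' t) x (b t x - b' t x)) (u - u') where
  continuousOn := hu.continuousOn.sub hu'.continuousOn
  contDiff ht := (hu.contDiff ht).sub (hu'.contDiff ht)
  hasDerivAt {t} ht x := by
    refine ((hu.hasDerivAt ht x).sub (hu'.hasDerivAt ht x)).congr_deriv ?_
    rw [Pi.sub_apply, driftLaplacian_sub (hu.contDiff ht) (hu'.contDiff ht)]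
    simp only [driftLaplacian, map_sub]
    ring

lemma smul {c c' : ℝ → ℝ} (hu : IsDriftDiffusionSolution ν b g u)
    (hc : ContinuousOn c (Ici 0)) (hc' : ∀ t > 0, HasDerivAt c (c' t) t) :
    IsDriftDiffusionSolution ν b (fun t x => c t * g t x + c' t * u t x)
      (fun t => c t • u t) where
  continuousOn := (hc.comp continuousOn_fst fun _ hp => hp.1).mul hu.continuousOn
  contDiff {t} ht := contDiff_const.smul (hu.contDiff ht)
  hasDerivAt {t} ht x := by
    refine ((hc' t ht).mul (hu.hasDerivAt ht x)).congr_deriv ?_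
    rw [driftLaplacian_smul (hu.contDiff ht)]
    ring

end IsDriftDiffusionSolution

lemma nonpos_of_isDriftDiffusionSolution_family {J : Type*} [Finite J] {ν B M : ℝ}
    {b : ℝ → V → V} {g z : J → ℝ → V → ℝ} (hν : 0 ≤ ν) (hb : ∀ t > 0, ∀ x, ‖b t x‖ ≤ B)
    (hz : ∀ k, IsDriftDiffusionSolution ν b (g k) (z k))
    (hM : ∀ k, ∀ t ≥ 0, ∀ x, z k t x ≤ M) (hinit : ∀ k x, z k 0 x ≤ 0)
    (hg : ∀ k, ∀ t > 0, ∀ x, 0 < z k t x → (∀ j, z j t x ≤ z k t x) → g k t x ≤ 0)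
    (i : J) {T : ℝ} (hT : 0 ≤ T) (x : V) : z i T x ≤ 0 := by
  set Λ := 2 * ν * Module.finrank ℝ V + B + 1
  have hB : 0 ≤ B := (norm_nonneg _).trans (hb 1 one_pos x)
  have hΛ : 0 ≤ Λ := by positivity
  refine ge_of_tendsto (tendsto_growthBarrier_zero Λ T x)
    (eventually_mem_nhdsWithin.mono fun ε (hε : 0 < ε) => ?_)
  by_contra! hlt
  let Φ : J → ℝ → V → ℝ := fun k t y => z k t y - growthBarrier ε Λ t y
  obtain ⟨k, t, ⟨ht, htT⟩, y, hpos, hmax⟩ :=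
    exists_pos_max_of_finite_family (Φ := Φ) (i := i) (x := x)
      (isCompact_closedBall 0 (M / ε))
      (fun k => ((hz k).continuousOn.mono (by gcongr; exact Icc_subset_Ici_self)).sub
        (continuous_growthBarrier ε Λ).continuousOn)
      (fun k t ht y hy => mem_closedBall_zero_iff.2 <|
        norm_le_of_growthBarrier_lt hε hΛ ht.1 ((sub_pos.1 hy).trans_le (hM k t ht.1 y)))
      (fun k y => by linarith [hinit k y, growthBarrier_pos (Λ := Λ) (t := 0) (x := y) hε])
      hT (sub_pos.2 hlt)
  have hz_pos : 0 < z k t y := (growthBarrier_pos hε).trans (sub_pos.1 hpos)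
  have hsource : g k t y ≤ 0 := hg k t ht y hz_pos fun j =>
    sub_le_sub_iff_right _ |>.1 (hmax j t ⟨ht.le, htT⟩ y)
  have htime := deriv_nonneg_of_isMaxOn_Icc ht
    (((hz k).hasDerivAt ht y).sub (hasDerivAt_growthBarrier ε Λ t y))
    (isMaxOn_iff.2 fun s hs => hmax k s ⟨hs.1, hs.2.trans htT⟩ y)
  have hspace : driftLaplacian ν (b t y) (z k t - growthBarrier ε Λ t) y ≤ 0 :=
    driftLaplacian_nonpos_of_isLocalMax hν
      (((hz k).contDiff ht).sub (contDiff_growthBarrier ε Λ t))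
      (.of_forall fun y' => hmax k t ⟨ht.le, htT⟩ y') (b t y)
  have hbarrier : driftLaplacian ν (b t y) (growthBarrier ε Λ t) y < Λ * growthBarrier ε Λ t y :=
    driftLaplacian_growthBarrier_lt hε hν (hb t ht y) (lt_add_one _)
  rw [driftLaplacian_sub ((hz k).contDiff ht) (contDiff_growthBarrier ε Λ t)] at hspace
  linarith

section UniquenessForSystems

variable {ι : Type*} [Finite ι] {ν B M : ℝ} {b : ℝ → V → V} {g w : ι → ℝ → V → ℝ}

lemma eq_zero_of_mul_source_nonpos (hν : 0 ≤ ν) (hb : ∀ t > 0, ∀ x, ‖b t x‖ ≤ B)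
    (hw : ∀ i, IsDriftDiffusionSolution ν b (g i) (w i))
    (hM : ∀ i, ∀ t ≥ 0, ∀ x, |w i t x| ≤ M) (hinit : ∀ i x, w i 0 x = 0)
    (hg : ∀ i, ∀ t > 0, ∀ x, (∀ j, |w j t x| ≤ |w i t x|) → w i t x * g i t x ≤ 0)
    (i : ι) {t : ℝ} (ht : 0 ≤ t) (x : V) : w i t x = 0 := by
  have hsign_sq (σ : ℤˣ) : (σ : ℝ) * σ = 1 := mod_cast Int.units_coe_mul_self σ
  have hsign_le (σ : ℤˣ) (c : ℝ) : (σ : ℝ) * c ≤ |c| := by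
    rcases Int.units_eq_one_or σ with rfl | rfl <;> simp [le_abs_self, neg_le_abs]
  have habs_le (c m : ℝ) (h : ∀ σ : ℤˣ, (σ : ℝ) * c ≤ m) : |c| ≤ m :=
    abs_le'.2 ⟨by simpa using h 1, by simpa using h (-1)⟩
  let z (k : ι × ℤˣ) (t : ℝ) : V → ℝ := (k.2 : ℝ) • w k.1 t
  have hz (k : ι × ℤˣ) := (hw k.1).smul (c := fun _ => (k.2 : ℝ)) (c' := 0)
    continuousOn_const fun t _ => hasDerivAt_const t _
  have hz_nonpos (k : ι × ℤˣ) : z k t x ≤ 0 := by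
    refine nonpos_of_isDriftDiffusionSolution_family (z := z) hν hb hz
      (fun k s hs y => (hsign_le _ _).trans (hM k.1 s hs y)) (fun k y => ?_)
      (fun k s hs y hpos hlead => ?_) k ht x
    · simp [z, hinit]
    · have hmul : w k.1 s y * g k.1 s y ≤ 0 := hg k.1 s hs y fun j =>
        (habs_le _ _ fun σ => hlead (j, σ)).trans (hsign_le k.2 _)
      have hmul_eq : z k s y * (k.2 * g k.1 s y) = w k.1 s y * g k.1 s y := by
        simp only [z, Pi.smul_apply, smul_eq_mul]
        linear_combination w k.1 s y * g k.1 s y * hsign_sq k.2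
      simpa using nonpos_of_mul_nonpos_right (hmul_eq.trans_le hmul) hpos
  exact abs_nonpos_iff.1 (habs_le _ _ fun σ => hz_nonpos (i, σ))

lemma eq_zero_of_abs_source_le {A a : ℝ → ℝ} (hν : 0 ≤ ν) (hb : ∀ t > 0, ∀ x, ‖b t x‖ ≤ B)
    (hw : ∀ i, IsDriftDiffusionSolution ν b (g i) (w i))
    (hM : ∀ i, ∀ t ≥ 0, ∀ x, |w i t x| ≤ M) (hinit : ∀ i x, w i 0 x = 0)
    (hA : ContinuousOn A (Ici 0)) (hA_nonneg : ∀ t ≥ 0, 0 ≤ A t)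
    (hA' : ∀ t > 0, HasDerivAt A (a t) t)
    (hg : ∀ i, ∀ t > 0, ∀ x, (∀ j, |w j t x| ≤ |w i t x|) → |g i t x| ≤ a t * |w i t x|)
    (i : ι) {t : ℝ} (ht : 0 ≤ t) (x : V) : w i t x = 0 := by
  have hexp_pos (s : ℝ) : 0 < Real.exp (-A s) := Real.exp_pos _
  have habs (j : ι) (s : ℝ) (y : V) :
      |(Real.exp (-A s) • w j s) y| = Real.exp (-A s) * |w j s y| := by
    rw [Pi.smul_apply, smul_eq_mul, abs_mul, abs_of_pos (hexp_pos s)]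
  have hscaled : (Real.exp (-A t) • w i t) x = 0 := by
    refine eq_zero_of_mul_source_nonpos (w := fun j s => Real.exp (-A s) • w j s) (M := M) hν hb
      (fun j => (hw j).smul hA.neg.rexp fun s hs => (hA' s hs).fun_neg.exp)
      (fun j s hs y => ?_) (fun j y => ?_) (fun j s hs y hlead => ?_) i ht x
    · have hexp_le : Real.exp (-A s) ≤ 1 := Real.exp_le_one_iff.2 (neg_nonpos.2 (hA_nonneg s hs))
      rw [habs]
      exact (mul_le_of_le_one_left (abs_nonneg _) hexp_le).trans (hM j s hs y)
    · rw [Pi.smul_apply, hinit, smul_zero]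
    · simp only [habs, mul_le_mul_iff_right₀ (hexp_pos s)] at hlead
      have hprod : w j s y * g j s y ≤ a s * w j s y ^ 2 := by
        calc w j s y * g j s y ≤ |w j s y| * |g j s y| := by
              rw [← abs_mul]
              exact le_abs_self _
          _ ≤ |w j s y| * (a s * |w j s y|) := by gcongr; exact hg j s hs y hlead
          _ = a s * w j s y ^ 2 := by rw [← sq_abs]; ring
      calc _ = Real.exp (-A s) ^ 2 * (w j s y * g j s y - a s * w j s y ^ 2) := by
            rw [Pi.smul_apply, smul_eq_mul]
            ring
        _ ≤ 0 := mul_nonpos_of_nonneg_of_nonpos (sq_nonneg _) (sub_nonpos.2 hprod)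
  exact (mul_eq_zero.1 hscaled).resolve_left (hexp_pos t).ne'

end UniquenessForSystems

end DriftDiffusion

section QuadraticModulus

variable {M R r : ℝ}

/-- A concave modulus of continuity: the parabola `2M (1 - (1 - r/R)²)` on `[0, R]`, continued by
its maximum `2M`, which is the largest possible oscillation of a function bounded by `M`. -/
def quadraticModulus (M R r : ℝ) : ℝ := 2 * M * (1 - max (1 - r / R) 0 ^ 2)

lemma continuous_quadraticModulus (M R : ℝ) : Continuous (quadraticModulus M R) := by
  unfold quadraticModulus
  fun_prop

lemma quadraticModulus_zero (M R : ℝ) : quadraticModulus M R 0 = 0 := by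
  simp [quadraticModulus]

lemma quadraticModulus_of_le (hR : 0 < R) (hr : R ≤ r) : quadraticModulus M R r = 2 * M := by
  have hmax : max (1 - r / R) 0 = 0 := max_eq_right (sub_nonpos.2 ((one_le_div hR).2 hr))
  rw [quadraticModulus, hmax]
  ring

lemma quadraticModulus_nonneg (hM : 0 ≤ M) (hR : 0 < R) (hr : 0 ≤ r) :
    0 ≤ quadraticModulus M R r := by
  have hmax : max (1 - r / R) 0 ≤ 1 := max_le (by linarith [div_nonneg hr hR.le]) zero_le_one
  have hsq : max (1 - r / R) 0 ^ 2 ≤ 1 := pow_le_one₀ (le_max_right _ _) hmax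
  exact mul_nonneg (by positivity) (sub_nonneg.2 hsq)

lemma quadraticModulus_le_mul (hM : 0 ≤ M) : quadraticModulus M R r ≤ 4 * M / R * r := by
  have hsq : 1 - max (1 - r / R) 0 ^ 2 ≤ 2 * (r / R) := by
    nlinarith [le_max_left (1 - r / R) 0, sq_nonneg (max (1 - r / R) 0 - 1)]
  calc quadraticModulus M R r ≤ 2 * M * (2 * (r / R)) := by unfold quadraticModulus; gcongr
    _ = 4 * M / R * r := by ring

lemma hasDerivAt_quadraticModulus (hR : 0 < R) (hr : r < R) :
    HasDerivAt (quadraticModulus M R) (4 * M / R * (1 - r / R)) r := by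
  have hsmooth : HasDerivAt (fun s => 2 * M * (1 - (1 - s / R) ^ 2))
      (4 * M / R * (1 - r / R)) r := by
    refine (((((hasDerivAt_id r).div_const R).const_sub 1).pow 2).const_sub 1
      |>.const_mul (2 * M)).congr_deriv ?_
    simp only [id, Nat.cast_ofNat]
    ring
  refine hsmooth.congr_of_eventuallyEq ?_
  filter_upwards [eventually_lt_nhds hr] with s hs
  rw [quadraticModulus, max_eq_left (sub_nonneg.2 ((div_le_one hR).2 hs.le))]

end QuadraticModulus

section TwoPointGap

variable {V : Type*} [NormedAddCommGroup V] {u : ℝ → V → ℝ} {M R κ ε Λ t : ℝ} {p : V × V}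

/-- The doubling-of-variables functional `u(t,x) - u(t,y) - φ(|x - y|)`, with `φ` the quadratic
modulus, penalized by growth barriers at `x` and `y` and by the term `2M (1 - κt)`, which makes it
nonpositive at time `0` and vanishes at time `1/κ`. -/
def twoPointGap (M R κ ε Λ : ℝ) (u : ℝ → V → ℝ) (t : ℝ) (p : V × V) : ℝ :=
  u t p.1 - growthBarrier ε Λ t p.1 - (u t p.2 + growthBarrier ε Λ t p.2) -
    quadraticModulus M R ‖p.1 - p.2‖ - 2 * M * (1 - κ * t)

lemma continuousOn_twoPointGap {s : Set (ℝ × V × V)}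
    (hu : ContinuousOn (Function.uncurry u) (Ici 0 ×ˢ univ)) (hs : ∀ q ∈ s, 0 ≤ q.1) :
    ContinuousOn (Function.uncurry (twoPointGap M R κ ε Λ u)) s := by
  have hβ : ContinuousOn (Function.uncurry (growthBarrier (V := V) ε Λ)) (Ici 0 ×ˢ univ) :=
    (continuous_growthBarrier ε Λ).continuousOn
  have hmaps₁ : MapsTo (fun q : ℝ × V × V => (q.1, q.2.1)) s (Ici 0 ×ˢ univ) :=
    fun q hq => ⟨hs q hq, mem_univ _⟩
  have hmaps₂ : MapsTo (fun q : ℝ × V × V => (q.1, q.2.2)) s (Ici 0 ×ˢ univ) :=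
    fun q hq => ⟨hs q hq, mem_univ _⟩
  have hφ : Continuous fun q : ℝ × V × V => quadraticModulus M R ‖q.2.1 - q.2.2‖ :=
    (continuous_quadraticModulus M R).comp (by fun_prop)
  exact ((((hu.sub hβ).comp (by fun_prop) hmaps₁).sub
    ((hu.add hβ).comp (by fun_prop) hmaps₂)).sub hφ.continuousOn).sub
    (Continuous.continuousOn (by fun_prop))

lemma add_growthBarrier_lt_of_twoPointGap_pos (hM : ∀ x, |u t x| ≤ M) (hR : 0 < R)
    (hκ : κ * t ≤ 1) (hpos : 0 < twoPointGap M R κ ε Λ u t p) :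
    growthBarrier ε Λ t p.1 + growthBarrier ε Λ t p.2 < 2 * M := by
  have hM_nonneg : 0 ≤ M := (abs_nonneg _).trans (hM p.1)
  have hφ := quadraticModulus_nonneg hM_nonneg hR (norm_nonneg (p.1 - p.2))
  have hpenalty : 0 ≤ 2 * M * (1 - κ * t) := mul_nonneg (by positivity) (sub_nonneg.2 hκ)
  rw [twoPointGap] at hpos
  linarith [abs_le.1 (hM p.1), abs_le.1 (hM p.2)]

lemma ne_of_twoPointGap_pos (hM : 0 ≤ M) (hε : 0 < ε) (hκ : κ * t ≤ 1)
    (hpos : 0 < twoPointGap M R κ ε Λ u t p) : p.1 ≠ p.2 := by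
  intro heq
  have hpenalty : 0 ≤ 2 * M * (1 - κ * t) := mul_nonneg (by positivity) (sub_nonneg.2 hκ)
  have hβ := growthBarrier_pos (Λ := Λ) (t := t) (x := p.2) hε
  rw [twoPointGap, heq, sub_self p.2, norm_zero, quadraticModulus_zero] at hpos
  linarith

lemma norm_sub_lt_of_twoPointGap_pos (hM : ∀ x, |u t x| ≤ M) (hε : 0 < ε) (hR : 0 < R)
    (hκ : κ * t ≤ 1) (hpos : 0 < twoPointGap M R κ ε Λ u t p) : ‖p.1 - p.2‖ < R := by
  by_contra! hle
  have hM_nonneg : 0 ≤ M := (abs_nonneg _).trans (hM p.1)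
  have hpenalty : 0 ≤ 2 * M * (1 - κ * t) := mul_nonneg (by positivity) (sub_nonneg.2 hκ)
  have hβ₁ := growthBarrier_pos (Λ := Λ) (t := t) (x := p.1) hε
  have hβ₂ := growthBarrier_pos (Λ := Λ) (t := t) (x := p.2) hε
  rw [twoPointGap, quadraticModulus_of_le hR hle] at hpos
  linarith [abs_le.1 (hM p.1), abs_le.1 (hM p.2)]

lemma twoPointGap_zero_nonpos (hM : ∀ x, |u 0 x| ≤ M) (hε : 0 < ε) (hR : 0 < R) :
    twoPointGap M R κ ε Λ u 0 p ≤ 0 := by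
  have hM_nonneg : 0 ≤ M := (abs_nonneg _).trans (hM p.1)
  have hφ := quadraticModulus_nonneg hM_nonneg hR (norm_nonneg (p.1 - p.2))
  have hβ₁ := growthBarrier_pos (Λ := Λ) (t := 0) (x := p.1) hε
  have hβ₂ := growthBarrier_pos (Λ := Λ) (t := 0) (x := p.2) hε
  rw [twoPointGap, mul_zero κ, sub_zero, mul_one]
  linarith [abs_le.1 (hM p.1), abs_le.1 (hM p.2)]

end TwoPointGap

section GradientEstimate

open scoped Topology
open Filter

variable {V : Type*} [NormedAddCommGroup V] [InnerProductSpace ℝ V] [FiniteDimensional ℝ V]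
  {ν B M R : ℝ}

lemma driftLaplacian_sub_driftLaplacian_lt_of_isLocalMax {f : V → ℝ} {ε Λ t κ : ℝ} {x y b c : V}
    (hε : 0 < ε) (hν : 0 ≤ ν) (hM : 0 ≤ M) (hb : ‖b‖ ≤ B) (hc : ‖c‖ ≤ B)
    (hΛ : 2 * ν * Module.finrank ℝ V + B < Λ) (hR : 0 < R)
    (hκ : R ^ 2 * κ + 4 * B * R ≤ 8 * ν) (hf : ContDiff ℝ 2 f) (hxy : x ≠ y)
    (hxyR : ‖x - y‖ < R)
    (hmax : IsLocalMax (fun p : V × V => f p.1 - growthBarrier ε Λ t p.1 -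
      (f p.2 + growthBarrier ε Λ t p.2) - quadraticModulus M R ‖p.1 - p.2‖) (x, y)) :
    driftLaplacian ν b f x - driftLaplacian ν c f y <
      Λ * growthBarrier ε Λ t x + Λ * growthBarrier ε Λ t y - 2 * M * κ := by
  have hβ : ContDiff ℝ 2 (growthBarrier (V := V) ε Λ t) := contDiff_growthBarrier ε Λ t
  have hφ : ∀ᶠ r in 𝓝 ‖x - y‖,
      HasDerivAt (quadraticModulus M R) (4 * M / R * (1 - r / R)) r :=
    (eventually_lt_nhds hxyR).mono fun r hr => hasDerivAt_quadraticModulus hR hr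
  have hφ' : HasDerivAt (fun r => 4 * M / R * (1 - r / R)) (4 * M / R * -(1 / R)) ‖x - y‖ :=
    (((hasDerivAt_id _).div_const R).const_sub 1).const_mul _
  have hratio : 0 ≤ 1 - ‖x - y‖ / R ∧ 1 - ‖x - y‖ / R ≤ 1 :=
    ⟨sub_nonneg.2 ((div_le_one hR).2 hxyR.le), sub_le_self _ (by positivity)⟩
  have htwo_point := driftLaplacian_sub_driftLaplacian_le_of_isLocalMax
    (f := f - growthBarrier ε Λ t) (g := f + growthBarrier ε Λ t) hν (hf.sub hβ) (hf.add hβ)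
    hxy hφ hφ' (mul_nonneg (by positivity) hratio.1) hmax b c
  have hbc : ‖b - c‖ ≤ 2 * B := by linarith [norm_sub_le b c]
  have hmodulus : 4 * ν * (4 * M / R * -(1 / R)) +
      4 * M / R * (1 - ‖x - y‖ / R) * ‖b - c‖ ≤ -(2 * M * κ) := by
    calc _ ≤ 4 * ν * (4 * M / R * -(1 / R)) + 4 * M / R * 1 * (2 * B) := by
          gcongr
          exact hratio.2
      _ = 2 * M / R ^ 2 * (4 * B * R - 8 * ν) := by
          field_simp
          ring
      _ ≤ 2 * M / R ^ 2 * -(R ^ 2 * κ) := by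
          gcongr
          linarith
      _ = -(2 * M * κ) := by field_simp
  have hbarrier_x := driftLaplacian_growthBarrier_lt (t := t) (x := x) hε hν hb hΛ
  have hbarrier_y := driftLaplacian_growthBarrier_lt (t := t) (x := y) hε hν hc hΛ
  rw [driftLaplacian_sub hf hβ, driftLaplacian_add hf hβ] at htwo_point
  linarith

namespace IsDriftDiffusionSolution

variable {b : ℝ → V → V} {u : ℝ → V → ℝ}

lemma twoPointGap_nonpos {ε Λ τ : ℝ} (hu : IsDriftDiffusionSolution ν b 0 u) (hν : 0 ≤ ν)
    (hb : ∀ t > 0, ∀ x, ‖b t x‖ ≤ B) (hM : ∀ t ≥ 0, ∀ x, |u t x| ≤ M) (hR : 0 < R)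
    (hτ : 0 < τ) (hRτ : R ^ 2 * τ⁻¹ + 4 * B * R ≤ 8 * ν) (hε : 0 < ε) (hΛ_nonneg : 0 ≤ Λ)
    (hΛ : 2 * ν * Module.finrank ℝ V + B < Λ) (p : V × V) :
    twoPointGap M R τ⁻¹ ε Λ u τ p ≤ 0 := by
  by_contra! hlt
  have hM_nonneg : 0 ≤ M := (abs_nonneg _).trans (hM 0 le_rfl p.1)
  have hκ : ∀ t ≤ τ, τ⁻¹ * t ≤ 1 := fun t ht => inv_mul_le_one_of_le₀ ht hτ.le
  obtain ⟨_, t, ⟨ht, htτ⟩, ⟨x, y⟩, hpos, hmax⟩ :=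
    exists_pos_max_of_finite_family (J := Unit) (Φ := fun _ => twoPointGap M R τ⁻¹ ε Λ u)
      (i := ()) (isCompact_closedBall 0 (2 * M / ε))
      (fun _ => continuousOn_twoPointGap hu.continuousOn fun q hq => hq.1.1)
      (fun _ t ht q hq => by
        have hβ := add_growthBarrier_lt_of_twoPointGap_pos (hM t ht.1) hR (hκ t ht.2) hq
        have hβ₁ := growthBarrier_pos (Λ := Λ) (t := t) (x := q.1) hε
        have hβ₂ := growthBarrier_pos (Λ := Λ) (t := t) (x := q.2) hε
        exact mem_closedBall_zero_iff.2 <| norm_prod_le_iff.2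
          ⟨norm_le_of_growthBarrier_lt hε hΛ_nonneg ht.1 (by linarith),
            norm_le_of_growthBarrier_lt hε hΛ_nonneg ht.1 (by linarith)⟩)
      (fun _ q => twoPointGap_zero_nonpos (hM 0 le_rfl) hε hR) hτ.le hlt
  have hspace : driftLaplacian ν (b t x) (u t) x - driftLaplacian ν (b t y) (u t) y <
      Λ * growthBarrier ε Λ t x + Λ * growthBarrier ε Λ t y - 2 * M * τ⁻¹ := by
    refine driftLaplacian_sub_driftLaplacian_lt_of_isLocalMax hε hν hM_nonneg (hb t ht x)
      (hb t ht y) hΛ hR hRτ (hu.contDiff ht) (ne_of_twoPointGap_pos hM_nonneg hε (hκ t htτ) hpos)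
      (norm_sub_lt_of_twoPointGap_pos (hM t ht.le) hε hR (hκ t htτ) hpos)
      (.of_forall fun q => ?_)
    have hq := hmax () t ⟨ht.le, htτ⟩ q
    simp only [twoPointGap] at hq
    linarith
  have hderiv := ((((hu.hasDerivAt ht x).sub (hasDerivAt_growthBarrier ε Λ t x)).sub
    ((hu.hasDerivAt ht y).add (hasDerivAt_growthBarrier ε Λ t y))).sub_const
    (quadraticModulus M R ‖x - y‖)).sub
    ((((hasDerivAt_id t).const_mul τ⁻¹).const_sub 1).const_mul (2 * M))
  have htime := deriv_nonneg_of_isMaxOn_Icc ht hderiv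
    (isMaxOn_iff.2 fun s hs => hmax () s ⟨hs.1, hs.2.trans htτ⟩ (x, y))
  simp only [Pi.zero_apply] at htime
  linarith

lemma sub_le_quadraticModulus {τ : ℝ} (hu : IsDriftDiffusionSolution ν b 0 u) (hν : 0 ≤ ν)
    (hb : ∀ t > 0, ∀ x, ‖b t x‖ ≤ B) (hM : ∀ t ≥ 0, ∀ x, |u t x| ≤ M) (hR : 0 < R)
    (hτ : 0 < τ) (hRτ : R ^ 2 * τ⁻¹ + 4 * B * R ≤ 8 * ν) (x y : V) :
    u τ x - u τ y ≤ quadraticModulus M R ‖x - y‖ := by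
  set Λ := 2 * ν * Module.finrank ℝ V + B + 1
  have hB : 0 ≤ B := (norm_nonneg _).trans (hb τ hτ x)
  have hlim : Tendsto (fun ε => quadraticModulus M R ‖x - y‖ +
      (growthBarrier ε Λ τ x + growthBarrier ε Λ τ y)) (𝓝[>] 0)
      (𝓝 (quadraticModulus M R ‖x - y‖)) := by
    simpa using ((tendsto_growthBarrier_zero Λ τ x).add
      (tendsto_growthBarrier_zero Λ τ y)).const_add (quadraticModulus M R ‖x - y‖)
  refine ge_of_tendsto hlim (eventually_mem_nhdsWithin.mono fun ε (hε : 0 < ε) => ?_)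
  have hgap := hu.twoPointGap_nonpos hν hb hM hR hτ hRτ hε (by positivity : 0 ≤ Λ)
    (lt_add_one _) (x, y)
  rw [twoPointGap, inv_mul_cancel₀ hτ.ne'] at hgap
  linarith

lemma norm_fderiv_le {t : ℝ} (hu : IsDriftDiffusionSolution ν b 0 u) (hν : 0 < ν)
    (hb : ∀ t > 0, ∀ x, ‖b t x‖ ≤ B) (hM : ∀ t ≥ 0, ∀ x, |u t x| ≤ M) (ht : 0 < t) (x : V) :
    ‖fderiv ℝ (u t) x‖ ≤ 4 * M * (1 / √(ν * t) + B / ν) := by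
  have hM_nonneg : 0 ≤ M := (abs_nonneg _).trans (hM t ht.le x)
  have hB : 0 ≤ B := (norm_nonneg _).trans (hb t ht x)
  set S := √(ν * t)
  have hS : 0 < S := Real.sqrt_pos.2 (by positivity)
  set R := (1 / S + B / ν)⁻¹ with hR_def
  have hR : 0 < R := by positivity
  have hR_mul : R * (1 / S) + R * (B / ν) = 1 := by
    rw [← mul_add]
    exact inv_mul_cancel₀ (by positivity)
  have hRS : R ≤ S := by
    rw [← div_le_one hS, ← mul_one_div]
    have hRB : 0 ≤ R * (B / ν) := by positivity
    linarith
  have hBR : R * B ≤ ν := by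
    rw [← div_le_one hν, mul_div_assoc]
    have hRS_pos : 0 < R * (1 / S) := by positivity
    linarith
  have hRt : R ^ 2 * t⁻¹ ≤ ν := by
    rw [mul_inv_le_iff₀ ht, ← Real.sq_sqrt (by positivity : 0 ≤ ν * t)]
    gcongr
  have hosc (y z : V) : u t y - u t z ≤ 4 * M * (1 / S + B / ν) * ‖y - z‖ := by
    have hmodulus := hu.sub_le_quadraticModulus hν.le hb hM hR ht (by linarith) y z
    refine hmodulus.trans ((quadraticModulus_le_mul hM_nonneg).trans_eq ?_)
    rw [hR_def, div_inv_eq_mul]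
  refine norm_fderiv_le_of_lip' ℝ (by positivity) (.of_forall fun y => ?_)
  rw [Real.norm_eq_abs]
  exact abs_sub_le_iff.2 ⟨hosc y x, norm_sub_rev y x ▸ hosc x y⟩

end IsDriftDiffusionSolution

end GradientEstimate

section Coordinates

open scoped Laplacian
open InnerProductSpace

variable {n : ℕ} {f : E n → ℝ}

lemma fderiv_eq_sum_pd (f : E n → ℝ) (x : E n) :
    fderiv ℝ f x = ∑ j, pd f j x • EuclideanSpace.proj j := by
  refine ContinuousLinearMap.ext fun v => ?_
  conv_lhs => rw [← (EuclideanSpace.basisFun (Fin n) ℝ).sum_repr v]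
  simp [pd, mul_comm]

lemma contDiff_succ_of_pd {k : ℕ} (hf : Differentiable ℝ f)
    (hpd : ∀ j, ContDiff ℝ k (pd f j)) : ContDiff ℝ (k + 1) f := by
  refine contDiff_succ_iff_fderiv.2 ⟨hf, by simp, ?_⟩
  rw [funext (fderiv_eq_sum_pd f)]
  exact ContDiff.sum fun j _ => (hpd j).smul contDiff_const

lemma laplacian_eq_sum_pd (hf : ContDiff ℝ 2 f) (x : E n) : Δ f x = ∑ j, pd (pd f j) j x := by
  have hf' : Differentiable ℝ (fderiv ℝ f) :=
    (hf.fderiv_right (m := 1) (by norm_num)).differentiable one_ne_zero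
  rw [laplacian_eq_iteratedFDeriv_orthonormalBasis f (EuclideanSpace.basisFun (Fin n) ℝ)]
  refine Finset.sum_congr rfl fun j _ => ?_
  have hpd := (hf' x).hasFDerivAt.clm_apply (hasFDerivAt_const (EuclideanSpace.single j (1 : ℝ)) x)
  rw [pd, show pd f j = fun y => fderiv ℝ f y (EuclideanSpace.single j 1) from rfl, hpd.fderiv]
  simp [iteratedFDeriv_two_apply]

lemma norm_le_sqrt_mul_of_forall_abs_le {m : ℝ} {v : E n} (hm : 0 ≤ m) (hv : ∀ j, |v j| ≤ m) :
    ‖v‖ ≤ √n * m := by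
  calc ‖v‖ = √(∑ j, ‖v j‖ ^ 2) := EuclideanSpace.norm_eq v
    _ ≤ √(∑ _j : Fin n, m ^ 2) := by
      gcongr with j
      exact hv j
    _ = √n * m := by simp [Real.sqrt_sq hm]

end Coordinates

section Burgers

variable {n : ℕ} {ν : ℝ} {h : Fin n → E n → ℝ} {u v : Fin n → ℝ → E n → ℝ}

/-- The velocity field in `ℝⁿ` with components `uⱼ`, which transports each of its own components in
the Burgers system. -/
def velocity (u : Fin n → ℝ → E n → ℝ) (t : ℝ) (x : E n) : E n :=
  WithLp.toLp 2 fun j => u j t x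

lemma norm_velocity_le {m t : ℝ} {x : E n} (hm : 0 ≤ m) (hu : ∀ j, |u j t x| ≤ m) :
    ‖velocity u t x‖ ≤ √n * m :=
  norm_le_sqrt_mul_of_forall_abs_le hm hu

namespace IsBurgersSolution

lemma contDiff_two (hu : IsBurgersSolution n ν h u) (i : Fin n) {t : ℝ} (ht : 0 ≤ t) :
    ContDiff ℝ 2 (u i t) := by
  obtain ⟨-, -, hregular, -, -⟩ := hu
  obtain ⟨hdiff, hpd⟩ := hregular i t ht
  have hpd_contDiff (j : Fin n) : ContDiff ℝ 1 (pd (u i t) j) := by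
    simpa using contDiff_succ_of_pd (k := 0) (hpd j).1 fun k => contDiff_zero.2 ((hpd j).2.2 k)
  simpa [one_add_one_eq_two] using contDiff_succ_of_pd (k := 1) hdiff hpd_contDiff

lemma isDriftDiffusionSolution (hu : IsBurgersSolution n ν h u) (i : Fin n) :
    IsDriftDiffusionSolution ν (velocity u) 0 (u i) := by
  have hsmooth {t : ℝ} (ht : 0 < t) : ContDiff ℝ 2 (u i t) := hu.contDiff_two i ht.le
  obtain ⟨hcont, hdiff, -, hequation, -⟩ := hu
  refine ⟨hcont i, hsmooth, fun {t} ht x => (hdiff i x t ht).hasDerivAt.congr_deriv ?_⟩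
  rw [hequation i x t ht, driftLaplacian, laplacian_eq_sum_pd (hsmooth ht), fderiv_eq_sum_pd]
  simp [velocity, mul_comm]

lemma norm_fderiv_le {M t : ℝ} (hu : IsBurgersSolution n ν h u) (hν : 0 < ν)
    (hM : ∀ i, ∀ t ≥ 0, ∀ x, |u i t x| ≤ M) (i : Fin n) (ht : 0 < t) (x : E n) :
    ‖fderiv ℝ (u i t) x‖ ≤ 4 * M * (1 / √(ν * t) + √n * M / ν) := by
  have hM_nonneg : 0 ≤ M := (abs_nonneg _).trans (hM i t ht.le x)
  exact (hu.isDriftDiffusionSolution i).norm_fderiv_le hν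
    (fun s hs y => norm_velocity_le hM_nonneg fun j => hM j s hs.le y) (hM i) ht x

lemma abs_fderiv_velocity_sub_le {M t : ℝ} (hv : IsBurgersSolution n ν h v) (hν : 0 < ν)
    (hM : ∀ i, ∀ t ≥ 0, ∀ x, |v i t x| ≤ M) (i : Fin n) (ht : 0 < t) (x : E n)
    (hlead : ∀ j, |u j t x - v j t x| ≤ |u i t x - v i t x|) :
    |fderiv ℝ (v i t) x (velocity u t x - velocity v t x)| ≤
      4 * √n * M * (1 / √(ν * t) + √n * M / ν) * |u i t x - v i t x| := by
  have hgrad := hv.norm_fderiv_le hν hM i ht x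
  have hvel : ‖velocity u t x - velocity v t x‖ ≤ √n * |u i t x - v i t x| :=
    norm_le_sqrt_mul_of_forall_abs_le (abs_nonneg _) hlead
  calc |fderiv ℝ (v i t) x (velocity u t x - velocity v t x)|
      ≤ 4 * M * (1 / √(ν * t) + √n * M / ν) * (√n * |u i t x - v i t x|) :=
        (fderiv ℝ (v i t) x).le_of_opNorm_le_of_le hgrad hvel
    _ = 4 * √n * M * (1 / √(ν * t) + √n * M / ν) * |u i t x - v i t x| := by ring

end IsBurgersSolution

/-- The time integral of the rate `4√n M (1/√(νt) + √n M/ν)` at which the gradient bound allows the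
difference of two solutions bounded by `M` to grow. -/
def growthExponent (n : ℕ) (ν M t : ℝ) : ℝ :=
  4 * √n * M * (2 * √(ν * t) / ν + √n * M / ν * t)

lemma continuous_growthExponent (n : ℕ) (ν M : ℝ) : Continuous (growthExponent n ν M) := by
  unfold growthExponent
  fun_prop

lemma growthExponent_nonneg {M t : ℝ} (hν : 0 ≤ ν) (hM : 0 ≤ M) (ht : 0 ≤ t) :
    0 ≤ growthExponent n ν M t := by
  unfold growthExponent
  positivity

lemma hasDerivAt_growthExponent {t : ℝ} (n : ℕ) (M : ℝ) (hν : 0 < ν) (ht : 0 < t) :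
    HasDerivAt (growthExponent n ν M) (4 * √n * M * (1 / √(ν * t) + √n * M / ν)) t := by
  have hsqrt : HasDerivAt (fun s => √(ν * s)) (ν * 1 / (2 * √(ν * t))) t :=
    ((hasDerivAt_id t).const_mul ν).sqrt (by positivity)
  refine ((((hsqrt.const_mul 2).div_const ν).add
    ((hasDerivAt_id t).const_mul (√n * M / ν))).const_mul (4 * √n * M)).congr_deriv ?_
  field_simp

lemma IsBurgersSolution.eq_of_abs_le {M : ℝ} (hu : IsBurgersSolution n ν h u)
    (hv : IsBurgersSolution n ν h v) (hν : 0 < ν) (hMu : ∀ i, ∀ t ≥ 0, ∀ x, |u i t x| ≤ M)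
    (hMv : ∀ i, ∀ t ≥ 0, ∀ x, |v i t x| ≤ M) (i : Fin n) {t : ℝ} (ht : 0 ≤ t) (x : E n) :
    u i t x = v i t x := by
  have hM : 0 ≤ M := (abs_nonneg _).trans (hMu i t ht x)
  have hinit (j : Fin n) (y : E n) : u j 0 y = v j 0 y := by
    obtain ⟨-, -, -, -, hu_init⟩ := hu
    obtain ⟨-, -, -, -, hv_init⟩ := hv
    rw [hu_init, hv_init]
  refine sub_eq_zero.1 (eq_zero_of_abs_source_le (w := fun j => u j - v j)
    (B := √n * M) (M := M + M) (A := growthExponent n ν M)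
    hν.le (fun s hs y => norm_velocity_le hM fun j => hMu j s hs.le y)
    (fun j => (hu.isDriftDiffusionSolution j).sub (hv.isDriftDiffusionSolution j))
    (fun j s hs y => (abs_sub _ _).trans (add_le_add (hMu j s hs y) (hMv j s hs y)))
    (fun j y => sub_eq_zero.2 (hinit j y))
    (continuous_growthExponent n ν M).continuousOn
    (fun _ hs => growthExponent_nonneg hν.le hM hs)
    (fun _ hs => hasDerivAt_growthExponent n M hν hs)
    (fun j s hs y hlead => ?_) i ht x)
  simp only [Pi.zero_apply, sub_self, zero_sub, abs_neg]
  exact hv.abs_fderiv_velocity_sub_le hν hMv j hs y hlead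

lemma GloballyBounded.exists_common_bound (hu : GloballyBounded n u) (hv : GloballyBounded n v) :
    ∃ M, (∀ i, ∀ t ≥ 0, ∀ x, |u i t x| ≤ M) ∧ ∀ i, ∀ t ≥ 0, ∀ x, |v i t x| ≤ M := by
  obtain ⟨M₁, h₁⟩ := hu
  obtain ⟨M₂, h₂⟩ := hv
  exact ⟨max M₁ M₂, fun i t ht x => (h₁ i t ht x).trans (le_max_left _ _),
    fun i t ht x => (h₂ i t ht x).trans (le_max_right _ _)⟩

end Burgers

theorem statement_1_general {n : ℕ} {ν : ℝ} (hν : 0 < ν) {h : Fin n → E n → ℝ}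
    {v1 v2 : Fin n → ℝ → E n → ℝ} (h1 : IsBurgersSolution n ν h v1) (h1b : GloballyBounded n v1)
    (h2 : IsBurgersSolution n ν h v2) (h2b : GloballyBounded n v2) :
    ∀ i, ∀ t ∈ Ici (0 : ℝ), ∀ x, v1 i t x = v2 i t x := by
  obtain ⟨M, hM1, hM2⟩ := h1b.exists_common_bound h2b
  exact fun i t ht x => h1.eq_of_abs_le h2 hν hM1 hM2 i ht x

/-- Uniqueness: two globally bounded, parabolically Hölder continuous classical
solutions of the Cauchy problem for the multivariate viscous Burgers system with the
same smooth bounded initial data coincide. -/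
theorem statement_1 (n : ℕ) (hn : 1 ≤ n) (ν : ℝ) (hν : 0 < ν)
    (h : Fin n → E n → ℝ)
    (hsm : ∀ i, ContDiff ℝ (⊤ : ℕ∞) (h i))
    (hbd : ∃ M : ℝ, ∀ i x, |h i x| ≤ M)
    (v1 v2 : Fin n → ℝ → E n → ℝ)
    (h1 : IsBurgersSolution n ν h v1) (h1b : GloballyBounded n v1)
    (h1H : ParabolicHolder n v1)
    (h2 : IsBurgersSolution n ν h v2) (h2b : GloballyBounded n v2)
    (h2H : ParabolicHolder n v2) :
    ∀ i, ∀ t ∈ Ici (0:ℝ), ∀ x, v1 i t x = v2 i t x := by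
  exact statement_1_general hν h1 h1b h2 h2b
end
end

section
/- Let n ≥ 1 and ν > 0. There exists a constant C₁* > 0, depending only on the dimension n and on ν, with the following property. Let T = 1, let b₁,…,bₙ : [0,1]×ℝⁿ → ℝ be bounded with bounded continuous first-order spatial derivatives and parabolically Hölder continuous, with |b|₀ ≤ C_b⁰ and |b|_{0,1} ≤ C_b¹ for finite constants C_b⁰, C_b¹, and let f : ℝⁿ → ℝ be continuously differentiable with |f|₁ := |f|₀ + Σⱼ|∂f/∂xⱼ|₀ ≤ C_f¹ < ∞. Then every bounded classical solution u ∈ C^{1,2} of the Cauchy problem ∂u/∂t = νΔu + Σ_{i=1}^n bᵢ ∂u/∂xᵢ on (0,1)×ℝⁿ with u(0,·) = f, whose first spatial derivatives are bounded, satisfies |u|_{0,1} ≤ (1 + C_b⁰·C₁*)·|f|₁. -/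
open Set

noncomputable section

/-- Supremum norm `|w|₀` over the domain `[0,T] × ℝⁿ`. -/
noncomputable def sup0 {n : ℕ} (T : ℝ) (w : ℝ → E n → ℝ) : ℝ :=
  ⨆ (t : Icc (0:ℝ) T) (x : E n), |w t.1 x|

/-- The norm `|w|_{0,1} = |w|₀ + Σⱼ |∂w/∂xⱼ|₀` over `[0,T] × ℝⁿ`. -/
noncomputable def norm01 {n : ℕ} (T : ℝ) (w : ℝ → E n → ℝ) : ℝ :=
  sup0 T w + ∑ j : Fin n, sup0 T fun t x => pd (w t) j x

/-- Supremum norm `|f|₀` over `ℝⁿ`. -/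
noncomputable def supS {n : ℕ} (f : E n → ℝ) : ℝ := ⨆ x : E n, |f x|

/-- The norm `|f|₁ = |f|₀ + Σⱼ |∂f/∂xⱼ|₀` on `ℝⁿ`. -/
noncomputable def norm1f {n : ℕ} (f : E n → ℝ) : ℝ := supS f + ∑ j : Fin n, supS (pd f j)

/-! If `u` solves the heat equation with source `g` and `R` is the reflection in the hyperplane
`xᵢ = c`, then `u - u ∘ R` again solves a heat equation and vanishes on the hyperplane. The
maximum principle on the half-space `xᵢ ≥ c` puts it below an explicit barrier depending on
`xᵢ - c` only, and the slope of the barrier bounds `2 ∂u/∂xᵢ` there. Over a time span `q²` this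
yields `|∂u/∂xᵢ| ≤ C (|g|₀ q + |u|₀ / q)`, or, for shorter times, the initial gradient plus
`C |g|₀ q`.

A drift term `b · ∇u` is a source of size at most `|b|₀ |∇u|₀`. Choosing `q` of order `1 / |b|₀`
absorbs it into the left-hand side and leaves an error `|b|₀ |u|₀`, where `|u|₀ ≤ |f|₀`. If this
`q` exceeds the square root of the final time, the initial-gradient bound is used alone.
-/

open Filter Topology

theorem deriv_deriv_nonpos_of_isLocalMax {φ : ℝ → ℝ} {a : ℝ} (hmax : IsLocalMax φ a)
    (hφ : ContinuousAt φ a) : deriv (deriv φ) a ≤ 0 := by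
  by_contra! hpos
  have hmin : IsLocalMin φ a := isLocalMin_of_deriv_deriv_pos hpos hmax.deriv_eq_zero hφ
  have hconst : φ =ᶠ[𝓝 a] fun _ => φ a := by
    filter_upwards [hmax, hmin] with y hle hge using le_antisymm hle hge
  have hzero : deriv (deriv φ) a = 0 := by simpa using hconst.deriv.deriv_eq
  exact hpos.ne' hzero

theorem sub_mul_nonpos_of_isMaxOn_uIcc {φ : ℝ → ℝ} {p s t : ℝ} (hφ : HasDerivAt φ p t)
    (hmax : IsMaxOn φ (uIcc s t) t) : (s - t) * p ≤ 0 := by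
  have hcone : s - t ∈ posTangentConeAt (uIcc s t) t :=
    sub_mem_posTangentConeAt_of_segment_subset (by rw [segment_symm, segment_eq_uIcc])
  simpa using hmax.localize.hasFDerivWithinAt_nonpos hφ.hasFDerivAt.hasFDerivWithinAt hcone

section PartialDerivatives

variable {n : ℕ} {G G' : E n → ℝ}

theorem hasDerivAt_add_smul_single (hG : Differentiable ℝ G) (x : E n) (j : Fin n) (h : ℝ) :
    HasDerivAt (fun h : ℝ => G (x + h • (EuclideanSpace.single j 1 : E n)))
      (pd G j (x + h • (EuclideanSpace.single j 1 : E n))) h := by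
  have hline : HasDerivAt (fun h : ℝ => x + h • (EuclideanSpace.single j 1 : E n))
      (EuclideanSpace.single j 1) h := by
    simpa using ((hasDerivAt_id h).smul_const (EuclideanSpace.single j 1 : E n)).const_add x
  exact (hG _).hasFDerivAt.comp_hasDerivAt h hline

theorem abs_sub_le_of_abs_pd_le {K : ℝ} {j : Fin n} (hG : Differentiable ℝ G)
    (hK : ∀ x, |pd G j x| ≤ K) (x : E n) (h : ℝ) :
    |G (x + h • (EuclideanSpace.single j 1 : E n)) - G x| ≤ K * |h| := by
  simpa using convex_univ.norm_image_sub_le_of_norm_hasDerivWithin_le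
    (fun h _ => (hasDerivAt_add_smul_single hG x j h).hasDerivWithinAt)
    (fun h _ => hK _) (mem_univ 0) (mem_univ h)

theorem pd_eq_zero_of_isLocalMax {x : E n} (hmax : IsLocalMax G x) (j : Fin n) :
    pd G j x = 0 := by
  simp [pd, hmax.fderiv_eq_zero]

theorem pd_pd_nonpos_of_isLocalMax {x : E n} (hmax : IsLocalMax G x) (hG : Differentiable ℝ G)
    (j : Fin n) (hG₂ : Differentiable ℝ (pd G j)) : pd (pd G j) j x ≤ 0 := by
  let line : ℝ → E n := fun h => x + h • EuclideanSpace.single j 1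
  have hline : Continuous line := by fun_prop
  have hline₀ : line 0 = x := by simp [line]
  have hmax' : IsLocalMax (G ∘ line) 0 :=
    IsLocalMax.comp_continuous (g := line) (by rwa [hline₀]) hline.continuousAt
  have hfirst : deriv (G ∘ line) = pd G j ∘ line :=
    funext fun h => (hasDerivAt_add_smul_single hG x j h).deriv
  have hsecond : deriv (deriv (G ∘ line)) 0 = pd (pd G j) j x := by
    rw [hfirst, ← hline₀]
    exact (hasDerivAt_add_smul_single hG₂ x j 0).deriv
  exact hsecond ▸ deriv_deriv_nonpos_of_isLocalMax hmax'
    (hG.continuous.comp hline).continuousAt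

theorem pd_sub (hG : Differentiable ℝ G) (hG' : Differentiable ℝ G') (j : Fin n) :
    pd (fun x => G x - G' x) j = fun x => pd G j x - pd G' j x := by
  funext x
  simp [pd, fderiv_fun_sub (hG x) (hG' x)]

theorem pd_neg (j : Fin n) : pd (fun x => -G x) j = fun x => -pd G j x := by
  funext x
  simp [pd]

theorem pd_const_mul (c : ℝ) (j : Fin n) :
    pd (fun x => c * G x) j = fun x => c * pd G j x := by
  funext x
  exact DFunLike.congr_fun (congrFun (fderiv_const_smul_field c) x) _

theorem pd_comp_coord {φ φ' : ℝ → ℝ} (hφ : ∀ y, HasDerivAt φ (φ' y) y) (i j : Fin n) :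
    pd (fun x : E n => φ (x i)) j = fun x => if j = i then φ' (x i) else 0 := by
  funext x
  have hcoord : HasFDerivAt (fun x : E n => x i) (EuclideanSpace.proj i : E n →L[ℝ] ℝ) x :=
    (EuclideanSpace.proj i : E n →L[ℝ] ℝ).hasFDerivAt
  have hcomp := (hφ (x i)).comp_hasFDerivAt x hcoord
  rw [Function.comp_def] at hcomp
  rw [pd, hcomp.fderiv]
  simp [PiLp.single_apply, eq_comm]

theorem pd_one_add_norm_sq (j : Fin n) :
    pd (fun x : E n => 1 + ‖x‖ ^ 2) j = fun x => 2 * x j := by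
  funext x
  rw [pd, ((hasStrictFDerivAt_norm_sq x).hasFDerivAt.const_add 1).fderiv]
  simp [EuclideanSpace.inner_single_right]

end PartialDerivatives

section Reflection

variable {n : ℕ} {G : E n → ℝ} (i : Fin n) (c : ℝ)

/-- Reflection of `ℝⁿ` in the hyperplane `xᵢ = c`. Comparing a solution with its mirror image
controls its `i`-th derivative on the hyperplane. -/
def hyperplaneReflection (x : E n) : E n :=
  x + (2 * (c - x i)) • (EuclideanSpace.single i 1 : E n)

theorem hasFDerivAt_hyperplaneReflection (x : E n) :
    HasFDerivAt (hyperplaneReflection i c)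
      (ContinuousLinearMap.id ℝ (E n) +
        ((-2 : ℝ) • (EuclideanSpace.proj i : E n →L[ℝ] ℝ)).smulRight
          (EuclideanSpace.single i 1)) x := by
  have hcoord : HasFDerivAt (fun x : E n => 2 * (c - x i))
      ((-2 : ℝ) • (EuclideanSpace.proj i : E n →L[ℝ] ℝ)) x := by
    simpa using! (((EuclideanSpace.proj i : E n →L[ℝ] ℝ).hasFDerivAt).const_sub c).const_mul 2
  exact (hasFDerivAt_id x).add (hcoord.smul_const _)

theorem differentiable_hyperplaneReflection :
    Differentiable ℝ (hyperplaneReflection (n := n) i c) :=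
  fun x => (hasFDerivAt_hyperplaneReflection i c x).differentiableAt

theorem pd_comp_hyperplaneReflection (hG : Differentiable ℝ G) (j : Fin n) :
    pd (fun x => G (hyperplaneReflection i c x)) j =
      fun x => (if j = i then -1 else 1) * pd G j (hyperplaneReflection i c x) := by
  funext x
  have hcomp := (hG _).hasFDerivAt.comp x (hasFDerivAt_hyperplaneReflection i c x)
  rw [Function.comp_def] at hcomp
  rw [pd, hcomp.fderiv]
  rcases eq_or_ne j i with rfl | hji
  · simp [pd]
    ring
  · simp [pd, hji.symm, hji]

theorem pd_pd_comp_hyperplaneReflection (hG : Differentiable ℝ G) (j : Fin n)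
    (hG₂ : Differentiable ℝ (pd G j)) :
    pd (pd (fun x => G (hyperplaneReflection i c x)) j) j =
      fun x => pd (pd G j) j (hyperplaneReflection i c x) := by
  rw [pd_comp_hyperplaneReflection i c hG, pd_const_mul, pd_comp_hyperplaneReflection i c hG₂]
  split_ifs <;> simp

theorem hyperplaneReflection_add_smul_single (x : E n) :
    hyperplaneReflection i c x + (2 * (x i - c)) • (EuclideanSpace.single i 1 : E n) = x := by
  unfold hyperplaneReflection
  module

theorem hyperplaneReflection_eq_self {x : E n} (hx : x i = c) :
    hyperplaneReflection i c x = x := by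
  simp [hyperplaneReflection, hx]

end Reflection

/-- `u` is a classical solution of `∂u/∂t = νΔu + g` on `(s,T) × ℝⁿ`, continuous on the closed slab
and twice differentiable in space on it. The source `g` is arbitrary and may itself depend on `u`,
so lower-order terms of an equation are put into it. -/
structure IsHeatSolution {n : ℕ} (ν s T : ℝ) (g u : ℝ → E n → ℝ) : Prop where
  continuousOn : ContinuousOn (fun p : ℝ × E n => u p.1 p.2) (Icc s T ×ˢ univ)
  differentiable : ∀ t ∈ Icc s T, Differentiable ℝ (u t)
  differentiable_pd : ∀ t ∈ Icc s T, ∀ j, Differentiable ℝ (pd (u t) j)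
  hasDerivAt : ∀ t ∈ Ioo s T, ∀ x, HasDerivAt (fun r => u r x)
    (ν * ∑ j, pd (pd (u t) j) j x + g t x) t

/-- Exponentially growing multiple of `1 + |x|²`. Subtracting it from a bounded function produces
a function that attains its maximum. -/
def quadraticPenalty {n : ℕ} (ε K s t : ℝ) (x : E n) : ℝ :=
  ε * Real.exp (K * (t - s)) * (1 + ‖x‖ ^ 2)

section QuadraticPenalty

variable {n : ℕ} {ν ε K s T : ℝ}

theorem pd_quadraticPenalty (t : ℝ) (j : Fin n) :
    pd (quadraticPenalty ε K s t) j =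
      fun x => ε * Real.exp (K * (t - s)) * (2 * x j) := by
  unfold quadraticPenalty
  rw [pd_const_mul, pd_one_add_norm_sq]

theorem pd_pd_quadraticPenalty (t : ℝ) (j : Fin n) :
    pd (pd (quadraticPenalty ε K s t) j) j =
      fun _ => 2 * (ε * Real.exp (K * (t - s))) := by
  have hlin : ∀ y : ℝ, HasDerivAt (fun y : ℝ => 2 * y) 2 y := fun y => by
    simpa using (hasDerivAt_id y).const_mul 2
  rw [pd_quadraticPenalty, pd_const_mul, pd_comp_coord hlin]
  simp [mul_comm]

theorem continuous_quadraticPenalty :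
    Continuous fun p : ℝ × E n => quadraticPenalty ε K s p.1 p.2 := by
  unfold quadraticPenalty
  fun_prop

theorem isHeatSolution_quadraticPenalty :
    IsHeatSolution ν s T
      (fun (t : ℝ) (x : E n) => ε * Real.exp (K * (t - s)) * (K * (1 + ‖x‖ ^ 2) - 2 * n * ν))
      (quadraticPenalty ε K s) where
  continuousOn := continuous_quadraticPenalty.continuousOn
  differentiable t _ := by
    unfold quadraticPenalty
    exact ((differentiable_id.norm_sq ℝ).const_add 1).const_mul _
  differentiable_pd t _ j := by
    rw [pd_quadraticPenalty]
    fun_prop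
  hasDerivAt t _ x := by
    have hexponent : HasDerivAt (fun r => K * (r - s)) K t := by
      simpa using ((hasDerivAt_id t).sub_const s).const_mul K
    refine ((hexponent.exp.const_mul ε).mul_const (1 + ‖x‖ ^ 2)).congr_deriv ?_
    simp only [pd_pd_quadraticPenalty, Finset.sum_const, Finset.card_univ, Fintype.card_fin,
      nsmul_eq_mul]
    ring

theorem mul_sum_abs_pd_quadraticPenalty_lt {B : ℝ} (hν : 0 ≤ ν) (hB : 0 ≤ B) (hε : 0 < ε)
    (hK : n * (2 * ν + B) < K) (t : ℝ) (x : E n) :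
    B * ∑ j, |pd (quadraticPenalty ε K s t) j x| <
      ε * Real.exp (K * (t - s)) * (K * (1 + ‖x‖ ^ 2) - 2 * n * ν) := by
  set A : ℝ := ε * Real.exp (K * (t - s)) with hA
  have hA₀ : 0 < A := by positivity
  have hgrad : ∀ j, |pd (quadraticPenalty ε K s t) j x| ≤ A * (1 + ‖x‖ ^ 2) := by
    intro j
    have hcoord : |x j| ≤ ‖x‖ := PiLp.norm_apply_le x j
    simp only [pd_quadraticPenalty, ← hA, abs_mul, abs_of_pos hA₀, abs_two]
    gcongr
    nlinarith [sq_nonneg (‖x‖ - 1)]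
  have hsum : ∑ j, |pd (quadraticPenalty ε K s t) j x| ≤ n * (A * (1 + ‖x‖ ^ 2)) := by
    simpa using Finset.sum_le_sum fun j (_ : j ∈ Finset.univ) => hgrad j
  have hnν : 0 ≤ n * ν := by positivity
  calc B * ∑ j, |pd (quadraticPenalty ε K s t) j x|
      ≤ B * (n * (A * (1 + ‖x‖ ^ 2))) := by gcongr
    _ < A * (K * (1 + ‖x‖ ^ 2) - 2 * n * ν) := by
      rw [show B * (n * (A * (1 + ‖x‖ ^ 2))) = A * (n * B * (1 + ‖x‖ ^ 2)) by ring]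
      refine mul_lt_mul_of_pos_left ?_ hA₀
      nlinarith [sq_nonneg ‖x‖]

theorem exists_isMaxOn_sub_quadraticPenalty {M : ℝ} (hε : 0 < ε) (hK : 0 ≤ K) {S : Set (E n)}
    (hS : IsClosed S) {w : ℝ → E n → ℝ}
    (hw : ContinuousOn (fun p : ℝ × E n => w p.1 p.2) (Icc s T ×ˢ S))
    (hM : ∀ t ∈ Icc s T, ∀ x ∈ S, w t x ≤ M) (hne : (Icc s T ×ˢ S).Nonempty) :
    ∃ p ∈ Icc s T ×ˢ S,
      IsMaxOn (fun p : ℝ × E n => w p.1 p.2 - quadraticPenalty ε K s p.1 p.2)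
        (Icc s T ×ˢ S) p := by
  obtain ⟨p₀, hp₀⟩ := hne
  set m : ℝ := w p₀.1 p₀.2 - quadraticPenalty ε K s p₀.1 p₀.2
  refine (hw.sub continuous_quadraticPenalty.continuousOn).exists_isMaxOn'
    (isClosed_Icc.prod hS) hp₀ ?_
  have hlarge : ∀ᶠ p in cocompact (ℝ × E n), p ∉ Icc s T ×ˢ Metric.closedBall 0 ((M - m) / ε) :=
    (isCompact_Icc.prod (isCompact_closedBall _ _)).compl_mem_cocompact
  filter_upwards [mem_inf_of_left hlarge, mem_inf_of_right (mem_principal_self _)]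
    with ⟨t, x⟩ hout ⟨ht, hx⟩
  have hnorm : (M - m) / ε < ‖x‖ := by
    by_contra! hle
    exact hout ⟨ht, by simpa using hle⟩
  have hexp : 1 ≤ Real.exp (K * (t - s)) :=
    Real.one_le_exp (mul_nonneg hK (sub_nonneg.2 ht.1))
  have hpenalty : M - m ≤ quadraticPenalty ε K s t x := by
    calc M - m ≤ ‖x‖ * ε := ((div_lt_iff₀ hε).1 hnorm).le
      _ ≤ (1 + ‖x‖ ^ 2) * (ε * Real.exp (K * (t - s))) := by
        gcongr
        · nlinarith [sq_nonneg (‖x‖ - 1)]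
        · exact le_mul_of_one_le_right hε.le hexp
      _ = quadraticPenalty ε K s t x := mul_comm _ _
  change w t x - quadraticPenalty ε K s t x ≤ m
  linarith [hM t ht x hx]

end QuadraticPenalty

namespace IsHeatSolution

variable {n : ℕ} {ν s T : ℝ} {g g' u u' w : ℝ → E n → ℝ}

theorem mono (hu : IsHeatSolution ν s T g u) {s' T' : ℝ} (hs : s ≤ s') (hT : T' ≤ T) :
    IsHeatSolution ν s' T' g u where
  continuousOn := hu.continuousOn.mono (prod_mono_left (Icc_subset_Icc hs hT))
  differentiable t ht := hu.differentiable t (Icc_subset_Icc hs hT ht)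
  differentiable_pd t ht := hu.differentiable_pd t (Icc_subset_Icc hs hT ht)
  hasDerivAt t ht := hu.hasDerivAt t (Ioo_subset_Ioo hs hT ht)

theorem sub (hu : IsHeatSolution ν s T g u) (hu' : IsHeatSolution ν s T g' u') :
    IsHeatSolution ν s T (fun t x => g t x - g' t x) (fun t x => u t x - u' t x) where
  continuousOn := hu.continuousOn.sub hu'.continuousOn
  differentiable t ht := (hu.differentiable t ht).sub (hu'.differentiable t ht)
  differentiable_pd t ht j := by
    rw [pd_sub (hu.differentiable t ht) (hu'.differentiable t ht)]
    exact (hu.differentiable_pd t ht j).sub (hu'.differentiable_pd t ht j)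
  hasDerivAt t ht x := by
    have htI := Ioo_subset_Icc_self ht
    refine ((hu.hasDerivAt t ht x).sub (hu'.hasDerivAt t ht x)).congr_deriv ?_
    simp_rw [pd_sub (hu.differentiable t htI) (hu'.differentiable t htI),
      pd_sub (hu.differentiable_pd t htI _) (hu'.differentiable_pd t htI _),
      Finset.sum_sub_distrib]
    ring

theorem neg (hu : IsHeatSolution ν s T g u) :
    IsHeatSolution ν s T (fun t x => -g t x) (fun t x => -u t x) where
  continuousOn := hu.continuousOn.neg
  differentiable t ht := (hu.differentiable t ht).neg
  differentiable_pd t ht j := by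
    rw [pd_neg]
    exact (hu.differentiable_pd t ht j).neg
  hasDerivAt t ht x := by
    refine (hu.hasDerivAt t ht x).neg.congr_deriv ?_
    simp_rw [pd_neg, Finset.sum_neg_distrib]
    ring

theorem comp_hyperplaneReflection (hu : IsHeatSolution ν s T g u) (i : Fin n) (c : ℝ) :
    IsHeatSolution ν s T (fun t x => g t (hyperplaneReflection i c x))
      (fun t x => u t (hyperplaneReflection i c x)) where
  continuousOn := hu.continuousOn.comp
    (continuous_fst.prodMk ((differentiable_hyperplaneReflection i c).continuous.comp
      continuous_snd)).continuousOn fun _ hp => ⟨hp.1, mem_univ _⟩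
  differentiable t ht := (hu.differentiable t ht).comp (differentiable_hyperplaneReflection i c)
  differentiable_pd t ht j := by
    rw [pd_comp_hyperplaneReflection i c (hu.differentiable t ht)]
    exact ((hu.differentiable_pd t ht j).comp
      (differentiable_hyperplaneReflection i c)).const_mul _
  hasDerivAt t ht x := by
    have htI := Ioo_subset_Icc_self ht
    simp_rw [pd_pd_comp_hyperplaneReflection i c (hu.differentiable t htI) _
      (hu.differentiable_pd t htI _)]
    exact hu.hasDerivAt t ht _

theorem source_nonneg_of_isMaxOn (hu : IsHeatSolution ν s T g u) (hν : 0 ≤ ν) {S : Set (E n)}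
    {t : ℝ} (ht : t ∈ Ioo s T) {x : E n} (hx : x ∈ interior S)
    (hmax : IsMaxOn (fun p : ℝ × E n => u p.1 p.2) (Icc s t ×ˢ S) (t, x)) : 0 ≤ g t x := by
  have htI := Ioo_subset_Icc_self ht
  have hmax_time : IsMaxOn (fun r => u r x) (uIcc s t) t := by
    rw [uIcc_of_le ht.1.le]
    exact fun r hr => hmax (mk_mem_prod hr (interior_subset hx))
  have hmax_space : IsLocalMax (u t) x := by
    filter_upwards [mem_interior_iff_mem_nhds.1 hx] with y hy
    exact hmax (mk_mem_prod (right_mem_Icc.2 ht.1.le) hy)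
  have htime := nonneg_of_mul_nonpos_right
    (sub_mul_nonpos_of_isMaxOn_uIcc (hu.hasDerivAt t ht x) hmax_time) (sub_neg.2 ht.1)
  have hlaplacian : ∑ j, pd (pd (u t) j) j x ≤ 0 := Finset.sum_nonpos fun j _ =>
    pd_pd_nonpos_of_isLocalMax hmax_space (hu.differentiable t htI) j
      (hu.differentiable_pd t htI j)
  linarith [mul_nonpos_of_nonneg_of_nonpos hν hlaplacian]

section MaximumPrinciple

variable {B M m : ℝ} {S : Set (E n)}

theorem mul_sum_abs_pd_lt_source_of_isMaxOn {ε K : ℝ} (hw : IsHeatSolution ν s T g w)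
    (hν : 0 ≤ ν) (hB : 0 ≤ B) (hε : 0 < ε) (hK : n * (2 * ν + B) < K) {t : ℝ} (ht : t ∈ Ioo s T)
    {x : E n} (hx : x ∈ interior S)
    (hmax : IsMaxOn (fun p : ℝ × E n => w p.1 p.2 - quadraticPenalty ε K s p.1 p.2)
      (Icc s t ×ˢ S) (t, x)) :
    B * ∑ j, |pd (w t) j x| < g t x := by
  have htI := Ioo_subset_Icc_self ht
  have hpen := isHeatSolution_quadraticPenalty (n := n) (ν := ν) (ε := ε) (K := K) (s := s) (T := T)
  have hsource := (hw.sub hpen).source_nonneg_of_isMaxOn hν ht hx hmax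
  have hgrad : ∀ j, pd (w t) j x = pd (quadraticPenalty ε K s t) j x := by
    intro j
    have hloc : IsLocalMax (fun y => w t y - quadraticPenalty ε K s t y) x := by
      filter_upwards [mem_interior_iff_mem_nhds.1 hx] with y hy
      exact hmax (mk_mem_prod (right_mem_Icc.2 ht.1.le) hy)
    have hzero := pd_eq_zero_of_isLocalMax hloc j
    rw [pd_sub (hw.differentiable t htI) (hpen.differentiable t htI)] at hzero
    exact sub_eq_zero.1 hzero
  simp_rw [hgrad]
  linarith [mul_sum_abs_pd_quadraticPenalty_lt (s := s) hν hB hε hK t x]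

theorem le_of_parabolic_boundary_le_of_lt (hw : IsHeatSolution ν s T g w) (hν : 0 ≤ ν)
    (hB : 0 ≤ B) (hS : IsClosed S) (hM : ∀ t ∈ Icc s T, ∀ x ∈ S, w t x ≤ M)
    (hinit : ∀ x ∈ S, w s x ≤ m) (hlat : ∀ t ∈ Icc s T, ∀ x ∈ frontier S, w t x ≤ m)
    (hg : ∀ t ∈ Ioo s T, ∀ x ∈ S, g t x ≤ B * ∑ j, |pd (w t) j x|)
    {t₀ : ℝ} (ht₀ : t₀ ∈ Ico s T) {x₀ : E n} (hx₀ : x₀ ∈ S) : w t₀ x₀ ≤ m := by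
  by_contra! hgt
  obtain ⟨K, hK⟩ := exists_gt (n * (2 * ν + B))
  have hK₀ : 0 ≤ K := le_trans (by positivity) hK.le
  obtain ⟨ε, hε, hεlt⟩ : ∃ ε > 0, quadraticPenalty ε K s t₀ x₀ < w t₀ x₀ - m := by
    obtain ⟨ε, hε, hεlt⟩ := exists_pos_mul_lt (sub_pos.2 hgt) (quadraticPenalty 1 K s t₀ x₀)
    refine ⟨ε, hε, lt_of_eq_of_lt ?_ hεlt⟩
    simp only [quadraticPenalty]
    ring
  have hsub : Icc s t₀ ⊆ Icc s T := Icc_subset_Icc_right ht₀.2.le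
  have hp₀ : (t₀, x₀) ∈ Icc s t₀ ×ˢ S := ⟨right_mem_Icc.2 ht₀.1, hx₀⟩
  obtain ⟨⟨t, x⟩, ⟨ht : t ∈ Icc s t₀, hx : x ∈ S⟩, hmax⟩ :=
    exists_isMaxOn_sub_quadraticPenalty hε hK₀ hS
      (hw.continuousOn.mono (prod_mono hsub (subset_univ S))) (fun t ht => hM t (hsub ht))
      ⟨_, hp₀⟩
  have hwm : m < w t x := by
    have hle : w t₀ x₀ - quadraticPenalty ε K s t₀ x₀ ≤ w t x - quadraticPenalty ε K s t x :=
      hmax hp₀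
    have hpos : 0 ≤ quadraticPenalty ε K s t x := by
      unfold quadraticPenalty
      positivity
    linarith
  have hst : s < t := ht.1.lt_of_ne fun h => hwm.not_ge (h ▸ hinit x hx)
  have hint : x ∈ interior S := by
    by_contra hnot
    exact hwm.not_ge (hlat t (hsub ht) x ⟨subset_closure hx, hnot⟩)
  have htT : t ∈ Ioo s T := ⟨hst, ht.2.trans_lt ht₀.2⟩
  exact (hw.mul_sum_abs_pd_lt_source_of_isMaxOn hν hB hε hK htT hint
    (hmax.on_subset (prod_mono_left (Icc_subset_Icc_right ht.2)))).not_ge (hg t htT x hx)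

theorem le_of_parabolic_boundary_le (hw : IsHeatSolution ν s T g w) (hν : 0 ≤ ν)
    (hB : 0 ≤ B) (hS : IsClosed S) (hM : ∀ t ∈ Icc s T, ∀ x ∈ S, w t x ≤ M)
    (hinit : ∀ x ∈ S, w s x ≤ m) (hlat : ∀ t ∈ Icc s T, ∀ x ∈ frontier S, w t x ≤ m)
    (hg : ∀ t ∈ Ioo s T, ∀ x ∈ S, g t x ≤ B * ∑ j, |pd (w t) j x|)
    {t : ℝ} (ht : t ∈ Icc s T) {x : E n} (hx : x ∈ S) : w t x ≤ m := by
  rcases (ht.1.trans ht.2).eq_or_lt with rfl | hsT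
  · rw [Icc_self, mem_singleton_iff] at ht
    exact ht ▸ hinit x hx
  have hcont : ContinuousOn (fun r => w r x) (Icc s T) :=
    hw.continuousOn.comp (continuousOn_id.prodMk continuousOn_const) fun r hr => ⟨hr, mem_univ x⟩
  rw [← closure_Ico hsT.ne] at ht hcont
  exact le_on_closure
    (fun r hr => hw.le_of_parabolic_boundary_le_of_lt hν hB hS hM hinit hlat hg hr hx)
    hcont continuousOn_const ht

theorem abs_le_of_initial_abs_le (hu : IsHeatSolution ν s T g u) {F : ℝ} (hν : 0 ≤ ν)
    (hB : 0 ≤ B) (hM : ∀ t ∈ Icc s T, ∀ x, |u t x| ≤ M) (hinit : ∀ x, |u s x| ≤ F)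
    (hg : ∀ t ∈ Ioo s T, ∀ x, |g t x| ≤ B * ∑ j, |pd (u t) j x|)
    {t : ℝ} (ht : t ∈ Icc s T) (x : E n) : |u t x| ≤ F := by
  refine abs_le'.2 ⟨?_, ?_⟩
  · exact hu.le_of_parabolic_boundary_le hν hB isClosed_univ
      (fun t ht x _ => (le_abs_self _).trans (hM t ht x))
      (fun x _ => (le_abs_self _).trans (hinit x)) (by simp)
      (fun t ht x _ => (le_abs_self _).trans (hg t ht x)) ht (mem_univ x)
  · exact hu.neg.le_of_parabolic_boundary_le hν hB isClosed_univ
      (fun t ht x _ => (neg_le_abs _).trans (hM t ht x))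
      (fun x _ => (neg_le_abs _).trans (hinit x)) (by simp)
      (fun t ht x _ => by simpa [pd_neg] using (neg_le_abs _).trans (hg t ht x)) ht (mem_univ x)

end MaximumPrinciple

end IsHeatSolution

theorem isHeatSolution_comp_coord {n : ℕ} {ν s T : ℝ} {φ φ₁ φ₂ φt : ℝ → ℝ → ℝ} (i : Fin n)
    (hφ : Continuous fun p : ℝ × ℝ => φ p.1 p.2)
    (h₁ : ∀ t y, HasDerivAt (φ t) (φ₁ t y) y) (h₂ : ∀ t y, HasDerivAt (φ₁ t) (φ₂ t y) y)
    (ht : ∀ t y, HasDerivAt (fun r => φ r y) (φt t y) t) :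
    IsHeatSolution ν s T (fun t (x : E n) => φt t (x i) - ν * φ₂ t (x i))
      (fun t x => φ t (x i)) where
  continuousOn := (hφ.comp (f := fun p : ℝ × E n => (p.1, p.2 i)) (by fun_prop)).continuousOn
  differentiable t _ x := ((h₁ t _).differentiableAt).comp x
    (EuclideanSpace.proj i : E n →L[ℝ] ℝ).differentiableAt
  differentiable_pd t _ j := by
    rw [pd_comp_coord (h₁ t)]
    split_ifs
    · exact fun x => ((h₂ t _).differentiableAt).comp x
        (EuclideanSpace.proj i : E n →L[ℝ] ℝ).differentiableAt
    · exact differentiable_const 0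
  hasDerivAt t _ x := by
    refine (ht t (x i)).congr_deriv ?_
    have hsecond : ∀ j, pd (pd (fun x : E n => φ t (x i)) j) j x =
        if j = i then φ₂ t (x i) else 0 := by
      intro j
      rw [pd_comp_coord (h₁ t)]
      rcases eq_or_ne j i with rfl | hji
      · simp [pd_comp_coord (h₂ t)]
      · simp [pd, hji]
    simp [hsecond]

theorem hasDerivAt_exp_neg_div (r y : ℝ) :
    HasDerivAt (fun y => Real.exp (-(y / r))) (-(Real.exp (-(y / r)) / r)) y := by
  refine ((hasDerivAt_id y).div_const r).fun_neg.exp.congr_deriv ?_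
  simp only [id]
  ring

theorem one_sub_exp_neg_div_nonneg {r y : ℝ} (hr : 0 ≤ r) (hy : 0 ≤ y) :
    0 ≤ 1 - Real.exp (-(y / r)) :=
  sub_nonneg.2 (Real.exp_le_one_iff.2 (neg_nonpos.2 (div_nonneg hy hr)))

/-- Barrier `2αy + β(T-t)/τ + (2Nτ+β)(1+(t-s)/τ)(1-e^{-y/√(ντ)})`, `τ = T - s`, for the heat
equation with a source of size `2N` on the half-line `y ≥ 0`. It lies above `2αy + β` at time `s`
and vanishes at `(T, 0)`, where its slope bounds that of the function below it. -/
def gradientBarrier (ν s T α β N t y : ℝ) : ℝ :=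
  2 * α * y + β * ((T - t) / (T - s)) +
    (2 * N * (T - s) + β) * (1 + (t - s) / (T - s)) * (1 - Real.exp (-(y / √(ν * (T - s)))))

section GradientBarrier

variable {ν s T α β N : ℝ}

theorem hasDerivAt_gradientBarrier (t y : ℝ) :
    HasDerivAt (gradientBarrier ν s T α β N t)
      (2 * α + (2 * N * (T - s) + β) * (1 + (t - s) / (T - s)) *
        (Real.exp (-(y / √(ν * (T - s)))) / √(ν * (T - s)))) y := by
  refine ((((hasDerivAt_id y).const_mul (2 * α)).add_const (β * ((T - t) / (T - s)))).add
    (((hasDerivAt_exp_neg_div √(ν * (T - s)) y).const_sub 1).const_mul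
      ((2 * N * (T - s) + β) * (1 + (t - s) / (T - s))))).congr_deriv ?_
  ring

theorem isHeatSolution_gradientBarrier {n : ℕ} (hν : 0 < ν) (hsT : s < T) (i : Fin n) (c : ℝ) :
    IsHeatSolution ν s T
      (fun t (x : E n) => 2 * N + (2 * N * (T - s) + β) * (t - s) / (T - s) ^ 2 *
        Real.exp (-((x i - c) / √(ν * (T - s)))))
      (fun t x => gradientBarrier ν s T α β N t (x i - c)) := by
  have hτ : 0 < T - s := sub_pos.2 hsT
  set r : ℝ := √(ν * (T - s))
  have hr₂ : r ^ 2 = ν * (T - s) := Real.sq_sqrt (by positivity)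
  have hr₀ : 0 < r := by positivity
  set κ : ℝ := 2 * N * (T - s) + β with hκ
  have hspace₂ : ∀ t y, HasDerivAt
      (fun y => 2 * α + κ * (1 + (t - s) / (T - s)) * (Real.exp (-((y - c) / r)) / r))
      (-(κ * (1 + (t - s) / (T - s)) * Real.exp (-((y - c) / r)) / r ^ 2)) y := fun t y => by
    refine (((((hasDerivAt_exp_neg_div r _).comp_sub_const y c).div_const r).const_mul
      _).const_add _).congr_deriv ?_
    field_simp
  have htime : ∀ t y, HasDerivAt (fun t => gradientBarrier ν s T α β N t (y - c))
      (-β / (T - s) + κ / (T - s) * (1 - Real.exp (-((y - c) / r)))) t := fun t y => by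
    refine ((((((hasDerivAt_id t).const_sub T).div_const (T - s)).const_mul β).const_add _).add
      (((((((hasDerivAt_id t).sub_const s).div_const (T - s)).const_add 1).const_mul κ)).mul_const
        (1 - Real.exp (-((y - c) / r))))).congr_deriv ?_
    ring
  convert isHeatSolution_comp_coord (ν := ν) (s := s) (T := T) i
    (φ := fun t y => gradientBarrier ν s T α β N t (y - c))
    (by unfold gradientBarrier; fun_prop)
    (fun t y => (hasDerivAt_gradientBarrier t (y - c)).comp_sub_const y c) hspace₂ htime
    using 3 with t x
  rw [hr₂]
  field_simp
  rw [hκ]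
  ring

theorem gradientBarrier_nonneg (hα : 0 ≤ α) (hβ : 0 ≤ β) (hN : 0 ≤ N) {t y : ℝ}
    (ht : t ∈ Icc s T) (hy : 0 ≤ y) : 0 ≤ gradientBarrier ν s T α β N t y := by
  have hst : 0 ≤ t - s := sub_nonneg.2 ht.1
  have htT : 0 ≤ T - t := sub_nonneg.2 ht.2
  have hsT : 0 ≤ T - s := sub_nonneg.2 (ht.1.trans ht.2)
  have hexp : 0 ≤ 1 - Real.exp (-(y / √(ν * (T - s)))) :=
    one_sub_exp_neg_div_nonneg (Real.sqrt_nonneg _) hy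
  unfold gradientBarrier
  positivity

theorem le_gradientBarrier_initial (hβ : 0 ≤ β) (hN : 0 ≤ N) (hsT : s < T) {y : ℝ}
    (hy : 0 ≤ y) : 2 * α * y + β ≤ gradientBarrier ν s T α β N s y := by
  have hτ : 0 < T - s := sub_pos.2 hsT
  have hexp : 0 ≤ 1 - Real.exp (-(y / √(ν * (T - s)))) :=
    one_sub_exp_neg_div_nonneg (Real.sqrt_nonneg _) hy
  rw [gradientBarrier, div_self hτ.ne', mul_one, le_add_iff_nonneg_right]
  simp only [sub_self, zero_div, add_zero, mul_one]
  positivity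

theorem gradientBarrier_final_zero : gradientBarrier ν s T α β N T 0 = 0 := by
  simp [gradientBarrier]

theorem hasDerivAt_gradientBarrier_final (hsT : s < T) :
    HasDerivAt (gradientBarrier ν s T α β N T)
      (2 * (α + (2 * N * (T - s) + β) / √(ν * (T - s)))) 0 := by
  refine (hasDerivAt_gradientBarrier T 0).congr_deriv ?_
  rw [div_self (sub_pos.2 hsT).ne', zero_div, neg_zero, Real.exp_zero]
  ring

end GradientBarrier

namespace IsHeatSolution

variable {n : ℕ} {ν s T α β M N : ℝ} {g u : ℝ → E n → ℝ} {i : Fin n}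

theorem sub_comp_hyperplaneReflection_le (hu : IsHeatSolution ν s T g u) (hν : 0 < ν)
    (hsT : s < T) (hM : ∀ t ∈ Icc s T, ∀ x, |u t x| ≤ M)
    (hg : ∀ t ∈ Ioo s T, ∀ x, |g t x| ≤ N) (hα : 0 ≤ α) (hβ : 0 ≤ β) (hN : 0 ≤ N)
    (hinit : ∀ x, ∀ h : ℝ, 0 ≤ h →
      u s (x + h • (EuclideanSpace.single i 1 : E n)) - u s x ≤ α * h + β)
    {c t : ℝ} (ht : t ∈ Icc s T) {x : E n} (hx : c ≤ x i) :
    u t x - u t (hyperplaneReflection i c x) ≤ gradientBarrier ν s T α β N t (x i - c) := by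
  have hcoord : Continuous fun x : E n => x i := by fun_prop
  have hw := (hu.sub (hu.comp_hyperplaneReflection i c)).sub
    (isHeatSolution_gradientBarrier (α := α) (β := β) (N := N) hν hsT i c)
  refine sub_nonpos.1 (hw.le_of_parabolic_boundary_le (B := 0) (M := 2 * M) (S := {x | c ≤ x i})
    hν.le le_rfl (isClosed_le continuous_const hcoord) ?_ ?_ ?_ ?_ ht hx)
  · intro t ht x hx
    have hbarrier : 0 ≤ gradientBarrier ν s T α β N t (x i - c) :=
      gradientBarrier_nonneg hα hβ hN ht (sub_nonneg.2 hx)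
    linarith [(abs_le.1 (hM t ht x)).2, (abs_le.1 (hM t ht (hyperplaneReflection i c x))).1]
  · intro x (hx : c ≤ x i)
    have hle : u s x - u s (hyperplaneReflection i c x) ≤ α * (2 * (x i - c)) + β := by
      simpa only [hyperplaneReflection_add_smul_single] using
        hinit (hyperplaneReflection i c x) (2 * (x i - c)) (by linarith)
    linarith [le_gradientBarrier_initial (ν := ν) (α := α) hβ hN hsT (sub_nonneg.2 hx)]
  · intro t ht x hx
    have hxc : x i = c := (frontier_le_subset_eq continuous_const hcoord hx).symm
    have hbarrier := gradientBarrier_nonneg (ν := ν) hα hβ hN ht (le_refl 0)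
    simpa [hyperplaneReflection_eq_self i c hxc, hxc] using hbarrier
  · intro t ht x _
    have hst : 0 ≤ t - s := sub_nonneg.2 ht.1.le
    have : 0 < T - s := sub_pos.2 hsT
    have hsource : 0 ≤ (2 * N * (T - s) + β) * (t - s) / (T - s) ^ 2 *
        Real.exp (-((x i - c) / √(ν * (T - s)))) := by positivity
    linarith [(abs_le.1 (hg t ht x)).2, (abs_le.1 (hg t ht (hyperplaneReflection i c x))).1]

theorem pd_le_of_initial_sub_le (hu : IsHeatSolution ν s T g u) (hν : 0 < ν)
    (hsT : s < T) (hM : ∀ t ∈ Icc s T, ∀ x, |u t x| ≤ M)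
    (hg : ∀ t ∈ Ioo s T, ∀ x, |g t x| ≤ N) (hα : 0 ≤ α) (hβ : 0 ≤ β) (hN : 0 ≤ N)
    (hinit : ∀ x, ∀ h : ℝ, 0 ≤ h →
      u s (x + h • (EuclideanSpace.single i 1 : E n)) - u s x ≤ α * h + β) (p : E n) :
    pd (u T) i p ≤ α + (2 * N * (T - s) + β) / √(ν * (T - s)) := by
  have hTI : T ∈ Icc s T := right_mem_Icc.2 hsT.le
  have hreflected : pd (fun x => u T (hyperplaneReflection i (p i) x)) i p = -pd (u T) i p := by
    rw [pd_comp_hyperplaneReflection i (p i) (hu.differentiable T hTI)]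
    simp [hyperplaneReflection_eq_self]
  have hderiv := ((hasDerivAt_add_smul_single (hu.differentiable T hTI) p i 0).sub
    (hasDerivAt_add_smul_single
      ((hu.comp_hyperplaneReflection i (p i)).differentiable T hTI) p i 0)).sub
    (hasDerivAt_gradientBarrier_final (ν := ν) (α := α) (β := β) (N := N) hsT)
  rw [zero_smul, add_zero, hreflected] at hderiv
  have hslope := sub_mul_nonpos_of_isMaxOn_uIcc (s := 1) hderiv fun h hh => ?_
  · linarith
  · rw [uIcc_of_ge zero_le_one] at hh
    have hle := hu.sub_comp_hyperplaneReflection_le hν hsT hM hg hα hβ hN hinit hTI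
      (c := p i) (x := p + h • (EuclideanSpace.single i 1 : E n)) (by simpa using hh.1)
    simpa [gradientBarrier_final_zero, hyperplaneReflection_eq_self] using hle

theorem abs_pd_le_of_initial_abs_sub_le (hu : IsHeatSolution ν s T g u) (hν : 0 < ν)
    (hsT : s < T) (hM : ∀ t ∈ Icc s T, ∀ x, |u t x| ≤ M)
    (hg : ∀ t ∈ Ioo s T, ∀ x, |g t x| ≤ N) (hα : 0 ≤ α) (hβ : 0 ≤ β) (hN : 0 ≤ N)
    (hinit : ∀ x, ∀ h : ℝ, 0 ≤ h →
      |u s (x + h • (EuclideanSpace.single i 1 : E n)) - u s x| ≤ α * h + β) (p : E n) :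
    |pd (u T) i p| ≤ α + (2 * N * (T - s) + β) / √(ν * (T - s)) := by
  refine abs_le'.2 ⟨?_, ?_⟩
  · exact hu.pd_le_of_initial_sub_le hν hsT hM hg hα hβ hN
      (fun x h hh => (le_abs_self _).trans (hinit x h hh)) p
  · simpa [pd_neg] using hu.neg.pd_le_of_initial_sub_le hν hsT (by simpa using hM)
      (by simpa using hg) hα hβ hN
      (fun x h hh => by linarith [(abs_le.1 (hinit x h hh)).1]) p

theorem abs_pd_le_of_initial_abs_pd_le {L : ℝ} (hu : IsHeatSolution ν 0 T g u) (hν : 0 < ν)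
    (hM : ∀ t ∈ Icc 0 T, ∀ x, |u t x| ≤ M) (hg : ∀ t ∈ Ioo 0 T, ∀ x, |g t x| ≤ N) (hN : 0 ≤ N)
    (hL : ∀ x, |pd (u 0) i x| ≤ L) {t : ℝ} (ht : t ∈ Icc 0 T) (x : E n) :
    |pd (u t) i x| ≤ L + 2 / √ν * (N * √t) := by
  rcases ht.1.eq_or_lt with rfl | ht₀
  · simpa using hL x
  have hT : (0 : ℝ) ≤ T := ht.1.trans ht.2
  have hinit : ∀ x, ∀ h : ℝ, 0 ≤ h →
      |u 0 (x + h • (EuclideanSpace.single i 1 : E n)) - u 0 x| ≤ L * h + 0 := fun x h hh => by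
    simpa [abs_of_nonneg hh] using
      abs_sub_le_of_abs_pd_le (hu.differentiable 0 (left_mem_Icc.2 hT)) hL x h
  have hle := (hu.mono le_rfl ht.2).abs_pd_le_of_initial_abs_sub_le hν ht₀
    (fun r hr => hM r (Icc_subset_Icc_right ht.2 hr))
    (fun r hr => hg r (Ioo_subset_Ioo_right ht.2 hr))
    ((abs_nonneg _).trans (hL 0)) le_rfl hN hinit x
  refine hle.trans_eq ?_
  have hsq : √t * √t = t := Real.mul_self_sqrt ht.1
  have : 0 < √ν := Real.sqrt_pos.2 hν
  have : 0 < √t := Real.sqrt_pos.2 ht₀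
  rw [sub_zero, add_zero, Real.sqrt_mul hν.le]
  nth_rewrite 1 [← hsq]
  field_simp

theorem abs_pd_le_of_abs_le_of_initial_abs_pd_le {F L q : ℝ} (hu : IsHeatSolution ν 0 T g u)
    (hν : 0 < ν) (hF : ∀ t ∈ Icc 0 T, ∀ x, |u t x| ≤ F)
    (hg : ∀ t ∈ Ioo 0 T, ∀ x, |g t x| ≤ N) (hN : 0 ≤ N) (hL : ∀ x, |pd (u 0) i x| ≤ L)
    (hq : 0 < q) {t : ℝ} (ht : t ∈ Icc 0 T) (x : E n) :
    |pd (u t) i x| ≤ L + 2 / √ν * (N * q + F / q) := by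
  have hF₀ : 0 ≤ F := (abs_nonneg _).trans (hF t ht 0)
  rcases le_or_gt t (q ^ 2) with htq | htq
  · refine (hu.abs_pd_le_of_initial_abs_pd_le hν hF hg hN hL ht x).trans ?_
    gcongr
    exact (mul_le_mul_of_nonneg_left (Real.sqrt_le_iff.2 ⟨hq.le, htq⟩) hN).trans
      (le_add_of_nonneg_right (by positivity))
  have hI : Icc (t - q ^ 2) t ⊆ Icc 0 T := Icc_subset_Icc (sub_nonneg.2 htq.le) ht.2
  have hlt : t - q ^ 2 < t := sub_lt_self t (by positivity)
  have hinit : ∀ x, ∀ h : ℝ, 0 ≤ h →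
      |u (t - q ^ 2) (x + h • (EuclideanSpace.single i 1 : E n)) - u (t - q ^ 2) x| ≤
        0 * h + 2 * F := fun x h _ => by
    have hmem := hI (left_mem_Icc.2 hlt.le)
    linarith [abs_sub (u (t - q ^ 2) (x + h • EuclideanSpace.single i 1)) (u (t - q ^ 2) x),
      hF _ hmem (x + h • EuclideanSpace.single i 1), hF _ hmem x]
  have hle := (hu.mono (sub_nonneg.2 htq.le) ht.2).abs_pd_le_of_initial_abs_sub_le hν hlt
    (fun r hr => hF r (hI hr))
    (fun r hr => hg r (Ioo_subset_Ioo (sub_nonneg.2 htq.le) ht.2 hr))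
    le_rfl (by positivity) hN hinit x
  have hL₀ : 0 ≤ L := (abs_nonneg _).trans (hL 0)
  have : 0 < √ν := Real.sqrt_pos.2 hν
  calc |pd (u t) i x| ≤ _ := hle
    _ = 2 / √ν * (N * q + F / q) := by
      rw [sub_sub_cancel, Real.sqrt_mul hν.le, Real.sqrt_sq hq.le]
      field_simp
      ring
    _ ≤ L + 2 / √ν * (N * q + F / q) := le_add_of_nonneg_left hL₀

end IsHeatSolution

section SupNorms

variable {n : ℕ} {T K : ℝ} {G : E n → ℝ} {w : ℝ → E n → ℝ}

theorem abs_le_supS (hK : ∀ x, |G x| ≤ K) (x : E n) : |G x| ≤ supS G :=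
  le_ciSup (f := fun x => |G x|) ⟨K, forall_mem_range.2 hK⟩ x

theorem supS_nonneg (G : E n → ℝ) : 0 ≤ supS G :=
  Real.iSup_nonneg fun _ => abs_nonneg _

theorem sup0_nonneg (T : ℝ) (w : ℝ → E n → ℝ) : 0 ≤ sup0 T w :=
  Real.iSup_nonneg fun _ => Real.iSup_nonneg fun _ => abs_nonneg _

theorem sup0_le (hK₀ : 0 ≤ K) (hK : ∀ t ∈ Icc 0 T, ∀ x, |w t x| ≤ K) : sup0 T w ≤ K :=
  Real.iSup_le (fun t => Real.iSup_le (hK t.1 t.2) hK₀) hK₀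

theorem abs_le_sup0 (hK : ∀ t ∈ Icc 0 T, ∀ x, |w t x| ≤ K) {t : ℝ} (ht : t ∈ Icc 0 T) (x : E n) :
    |w t x| ≤ sup0 T w := by
  have hK₀ : 0 ≤ K := (abs_nonneg _).trans (hK t ht 0)
  have hspace : |w t x| ≤ supS (w t) := abs_le_supS (hK t ht) x
  refine hspace.trans (le_ciSup (f := fun t : Icc (0 : ℝ) T => ⨆ x, |w t.1 x|) ⟨K, ?_⟩ ⟨t, ht⟩)
  exact forall_mem_range.2 fun t => Real.iSup_le (hK t.1 t.2) hK₀

theorem sum_sup0_le_sum_add {L : Fin n → ℝ} {v : Fin n → ℝ → E n → ℝ} (hL : ∀ j, 0 ≤ L j)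
    (hK₀ : 0 ≤ K) (hK : ∀ j, ∀ t ∈ Icc 0 T, ∀ x, |v j t x| ≤ L j + K) :
    ∑ j, sup0 T (v j) ≤ ∑ j, L j + n * K := by
  have hsum := Finset.sum_le_sum fun j (_ : j ∈ Finset.univ) =>
    sup0_le (add_nonneg (hL j) hK₀) (hK j)
  simpa [Finset.sum_add_distrib] using hsum

end SupNorms

theorem le_add_mul_of_forall_scale_le {a B F M S r : ℝ} (ha : 0 ≤ a) (hB : 0 ≤ B) (hF : 0 ≤ F)
    (hM : 0 ≤ M) (hS : 0 ≤ S) (hr : 0 ≤ r) (hle : M ≤ S + a * (B * M * r))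
    (hscale : ∀ q > 0, M ≤ S + a * (B * M * q + F / q)) :
    M ≤ S + B * (2 * a * r * S + 4 * a ^ 2 * F) := by
  rcases le_or_gt (2 * (a * B * r)) 1 with hsmall | hlarge
  · have hM₂ : M ≤ 2 * S := by nlinarith
    calc M ≤ S + a * B * r * M := by linarith
      _ ≤ S + a * B * r * (2 * S) := by gcongr
      _ ≤ S + a * B * r * (2 * S) + B * (4 * a ^ 2 * F) := le_add_of_nonneg_right (by positivity)
      _ = S + B * (2 * a * r * S + 4 * a ^ 2 * F) := by ring
  · have haB : 0 < a * B := by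
      by_contra! hnonpos
      nlinarith
    have ha₀ : a ≠ 0 := left_ne_zero_of_mul haB.ne'
    have hB₀ : B ≠ 0 := right_ne_zero_of_mul haB.ne'
    have hM₂ : M ≤ 2 * S + 4 * a ^ 2 * B * F := by
      have hq := hscale (1 / (2 * (a * B))) (by positivity)
      have hterm : a * (B * M * (1 / (2 * (a * B))) + F / (1 / (2 * (a * B)))) =
          M / 2 + 2 * a ^ 2 * B * F := by
        field_simp
      linarith
    nlinarith

theorem abs_sum_mul_le_mul_sum_abs {ι : Type*} {t : Finset ι} {b p : ι → ℝ} {B : ℝ}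
    (hb : ∀ i ∈ t, |b i| ≤ B) : |∑ i ∈ t, b i * p i| ≤ B * ∑ i ∈ t, |p i| := by
  calc |∑ i ∈ t, b i * p i| ≤ ∑ i ∈ t, |b i| * |p i| := by
        simpa only [abs_mul] using Finset.abs_sum_le_sum_abs (fun i => b i * p i) t
    _ ≤ ∑ i ∈ t, B * |p i| := Finset.sum_le_sum fun i hi => by gcongr; exact hb i hi
    _ = B * ∑ i ∈ t, |p i| := (Finset.mul_sum _ _ _).symm

theorem sum_sup0_pd_le {n : ℕ} {ν T B C F : ℝ} {g u : ℝ → E n → ℝ} (hu : IsHeatSolution ν 0 T g u)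
    (hν : 0 < ν) (hB : 0 ≤ B) (hF₀ : 0 ≤ F) (hF : ∀ t ∈ Icc 0 T, ∀ x, |u t x| ≤ F)
    (hT : 0 ≤ T) (hC : ∀ t ∈ Icc 0 T, ∀ x, ∀ j, |pd (u t) j x| ≤ C)
    (hg : ∀ t ∈ Ioo 0 T, ∀ x, |g t x| ≤ B * ∑ j, |pd (u t) j x|) :
    (∑ j, sup0 T fun t x => pd (u t) j x) ≤ ∑ j, supS (pd (u 0) j) +
      B * (2 * (2 * n / √ν) * √T * ∑ j, supS (pd (u 0) j) + 4 * (2 * n / √ν) ^ 2 * F) := by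
  set M : ℝ := ∑ j, sup0 T fun t x => pd (u t) j x
  have hM : 0 ≤ M := Finset.sum_nonneg fun _ _ => sup0_nonneg _ _
  have hL₀ : ∀ j, 0 ≤ supS (pd (u 0) j) := fun _ => supS_nonneg _
  have hL : ∀ j x, |pd (u 0) j x| ≤ supS (pd (u 0) j) := fun j =>
    abs_le_supS fun x => hC 0 (left_mem_Icc.2 hT) x j
  have hsource : ∀ t ∈ Ioo 0 T, ∀ x, |g t x| ≤ B * M := fun t ht x =>
    (hg t ht x).trans <| mul_le_mul_of_nonneg_left
      (Finset.sum_le_sum fun j _ => abs_le_sup0 (w := fun t x => pd (u t) j x)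
        (fun t ht x => hC t ht x j) (Ioo_subset_Icc_self ht) x) hB
  have hBM : 0 ≤ B * M := mul_nonneg hB hM
  refine le_add_mul_of_forall_scale_le (by positivity) hB hF₀ hM
    (Finset.sum_nonneg fun j _ => hL₀ j) (Real.sqrt_nonneg T) ?_ fun q hq => ?_
  · refine (sum_sup0_le_sum_add hL₀ (by positivity) fun j t ht x =>
      (hu.abs_pd_le_of_initial_abs_pd_le hν hF hsource hBM (hL j) ht x).trans
        (?_ : _ ≤ _ + 2 / √ν * (B * M * √T))).trans_eq (by ring)
    gcongr
    exact ht.2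
  · exact (sum_sup0_le_sum_add hL₀ (by positivity) fun j _ ht x =>
      hu.abs_pd_le_of_abs_le_of_initial_abs_pd_le hν hF hsource hBM (hL j) hq ht x).trans_eq
        (by ring)

theorem statement_3_general {n : ℕ} {ν T B : ℝ} {g u : ℝ → E n → ℝ} (hν : 0 < ν) (hT : 0 ≤ T)
    (hB : 0 ≤ B) (hu : IsHeatSolution ν 0 T g u)
    (hbdd : ∃ C, ∀ t ∈ Icc 0 T, ∀ x, |u t x| ≤ C ∧ ∀ j, |pd (u t) j x| ≤ C)
    (hg : ∀ t ∈ Ioo 0 T, ∀ x, |g t x| ≤ B * ∑ j, |pd (u t) j x|) :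
    norm01 T u ≤
      (1 + B * (2 * (2 * n / √ν) * √T + 4 * (2 * n / √ν) ^ 2)) * norm1f (u 0) := by
  obtain ⟨C, hC⟩ := hbdd
  set a : ℝ := 2 * n / √ν
  set F : ℝ := supS (u 0)
  set S : ℝ := ∑ j, supS (pd (u 0) j)
  have : 0 ≤ a := by positivity
  have hF₀ : 0 ≤ F := supS_nonneg _
  have hS₀ : 0 ≤ S := Finset.sum_nonneg fun _ _ => supS_nonneg _
  have hF : ∀ t ∈ Icc 0 T, ∀ x, |u t x| ≤ F := fun t ht x =>
    hu.abs_le_of_initial_abs_le hν.le hB (fun t ht x => (hC t ht x).1)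
      (abs_le_supS fun x => (hC 0 (left_mem_Icc.2 hT) x).1) hg ht x
  calc norm01 T u
      ≤ F + (S + B * (2 * a * √T * S + 4 * a ^ 2 * F)) :=
        add_le_add (sup0_le hF₀ hF)
          (sum_sup0_pd_le hu hν hB hF₀ hF hT (fun t ht x => (hC t ht x).2) hg)
    _ ≤ F + (S + B * (2 * a * √T * S + 4 * a ^ 2 * F)) + B * (2 * a * √T * F + 4 * a ^ 2 * S) :=
        le_add_of_nonneg_right (by positivity)
    _ = (1 + B * (2 * a * √T + 4 * a ^ 2)) * norm1f (u 0) := by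
        simp only [norm1f]
        ring

/-- Part (ii) of the lemma: there is `C₁* > 0`, depending only on `n` and `ν`, such
that any bounded classical solution `u` (with bounded first spatial derivatives) of
`∂u/∂t = νΔu + b·∇u` on `[0,1]×ℝⁿ`, `u(0,·)=f`, with `|b|₀ ≤ C_b⁰`, `|b|_{0,1} ≤ C_b¹`
and `|f|₁ ≤ C_f¹`, satisfies `|u|_{0,1} ≤ (1 + C_b⁰ C₁*)·|f|₁`. -/
theorem statement_3 (n : ℕ) (hn : 1 ≤ n) (ν : ℝ) (hν : 0 < ν) :
    ∃ C₁ : ℝ, 0 < C₁ ∧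
    ∀ (b : Fin n → ℝ → E n → ℝ) (f : E n → ℝ) (u : ℝ → E n → ℝ) (Cb0 Cb1 Cf : ℝ),
      -- b bounded with bounded continuous first-order spatial derivatives
      (∃ M : ℝ, ∀ i, ∀ t ∈ Icc (0:ℝ) 1, ∀ x, |b i t x| ≤ M ∧ ∀ j, |pd (b i t) j x| ≤ M) →
      (∀ i, ∀ t ∈ Icc (0:ℝ) 1, Differentiable ℝ (b i t) ∧ ∀ j, Continuous (pd (b i t) j)) →
      -- b parabolically Hölder continuous
      (∃ δ ∈ Ioo (0:ℝ) 1, ∃ C : ℝ, ∀ i, ∀ t₁ ∈ Icc (0:ℝ) 1, ∀ t₂ ∈ Icc (0:ℝ) 1, ∀ x₁ x₂,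
        |b i t₁ x₁ - b i t₂ x₂| ≤ C * (Real.sqrt |t₁ - t₂| + ‖x₁ - x₂‖) ^ δ) →
      (∀ i, sup0 1 (b i) ≤ Cb0) →
      (∀ i, norm01 1 (b i) ≤ Cb1) →
      -- f continuously differentiable with |f|₁ ≤ C_f¹ < ∞
      ContDiff ℝ 1 f →
      (∃ M : ℝ, ∀ x, |f x| ≤ M ∧ ∀ j, |pd f j x| ≤ M) →
      norm1f f ≤ Cf →
      -- u a bounded classical solution with bounded first spatial derivatives
      (∃ M : ℝ, ∀ t ∈ Icc (0:ℝ) 1, ∀ x, |u t x| ≤ M ∧ ∀ j, |pd (u t) j x| ≤ M) →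
      ContinuousOn (fun p : ℝ × E n => u p.1 p.2) (Icc (0:ℝ) 1 ×ˢ univ) →
      (∀ x, ∀ t ∈ Ioo (0:ℝ) 1, DifferentiableAt ℝ (fun s => u s x) t) →
      (∀ t ∈ Icc (0:ℝ) 1, Differentiable ℝ (u t) ∧ ∀ j,
        Differentiable ℝ (pd (u t) j) ∧ Continuous (pd (u t) j) ∧
        ∀ k, Continuous (pd (pd (u t) j) k)) →
      (∀ x, ∀ t ∈ Ioo (0:ℝ) 1, deriv (fun s => u s x) t =
        ν * ∑ j, pd (pd (u t) j) j x + ∑ i, b i t x * pd (u t) i x) →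
      (∀ x, u 0 x = f x) →
      norm01 1 u ≤ (1 + Cb0 * C₁) * norm1f f := by
  have : (0 : ℝ) < n := by exact_mod_cast hn
  refine ⟨2 * (2 * n / √ν) + 4 * (2 * n / √ν) ^ 2, by positivity, ?_⟩
  rintro b f u B - - ⟨Mb, hMb⟩ - - hB - - - - hbdd hcont hdt hdx hpde hu0
  obtain rfl : u 0 = f := funext hu0
  have hb : ∀ i, ∀ t ∈ Icc (0 : ℝ) 1, ∀ x, |b i t x| ≤ B := fun i t ht x =>
    (abs_le_sup0 (fun t ht x => (hMb i t ht x).1) ht x).trans (hB i)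
  have hB₀ : 0 ≤ B := (abs_nonneg _).trans (hb ⟨0, hn⟩ 0 (by simp) 0)
  have hu : IsHeatSolution ν 0 1 (fun t x => ∑ i, b i t x * pd (u t) i x) u :=
    { continuousOn := hcont
      differentiable := fun t ht => (hdx t ht).1
      differentiable_pd := fun t ht j => ((hdx t ht).2 j).1
      hasDerivAt := fun t ht x => hpde x t ht ▸ (hdt x t ht).hasDerivAt }
  simpa using statement_3_general hν zero_le_one hB₀ hu hbdd fun t ht x =>
    abs_sum_mul_le_mul_sum_abs fun i _ => hb i t (Ioo_subset_Icc_self ht) x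
end
end
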